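/- arXiv:1707.08890 — 4 statements merged into one kernel-verified Lean document; each statement's English description precedes it below -/
import Mathlib

section
/- Let (X_n) be a determining sequence of random variables on a probability space (Ω, 𝓕, P) with limit random measure μ. Then there exists a subsequence (X_{n_k}) and random variables X and Y ≥ 0 such that (X_{n_k}), together with all of its further subsequences, satisfies the central limit theorem N^{-1/2} Σ_{k=1}^N (X_{n_k} − X) → N(0, Y) in distribution (where N(0, Y) is the distribution of Y^{1/2}·ζ with ζ a standard normal random variable independent of Y; equivalently, the characteristic functions converge to E exp(−Y t²/2) for every t) if and only if ∫_ℝ x² dμ(x) < ∞ almost surely. -/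
open MeasureTheory Filter Finset
open scoped Topology BoundedContinuousFunction ENNReal

/-- The characteristic function of a measure on `ℝ`. -/
noncomputable def charFn (μ : Measure ℝ) (t : ℝ) : ℂ :=
  ∫ x, Complex.exp (Complex.I * (t * x)) ∂μ

/-- `μ ∈ S(α, c)`: `μ` is a symmetric probability distribution on `ℝ` whose characteristic
function satisfies `φ(t) = 1 - c|t|^α + o(|t|^α)` as `t → 0`. -/
def MemS (α c : ℝ) (μ : Measure ℝ) : Prop :=
  IsProbabilityMeasure μ ∧ μ.map (fun x => -x) = μ ∧
    Asymptotics.IsLittleO (𝓝 (0 : ℝ))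
      (fun t : ℝ => charFn μ t - ((1 - c * |t| ^ α : ℝ) : ℂ))
      (fun t : ℝ => |t| ^ α)

/-- `β` is the function associated with `μ ∈ S(α, c)`:
`φ(t) = 1 - c|t|^α + β(t)|t|^α` with `β` bounded continuous and `β 0 = 0`. -/
structure IsAssocFn (α c : ℝ) (μ : Measure ℝ) (β : ℝ → ℝ) : Prop where
  continuous : Continuous β
  bounded : ∃ M : ℝ, ∀ t, |β t| ≤ M
  zero : β 0 = 0
  eq : ∀ t : ℝ, charFn μ t = ((1 - c * |t| ^ α + β t * |t| ^ α : ℝ) : ℂ)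

/-- The metric `ρ` on `S(α, c)`, expressed in terms of the associated functions. -/
noncomputable def rho (β₁ β₂ : ℝ → ℝ) : ℝ :=
  (⨆ t : {t : ℝ // |t| ≤ 1}, |β₁ t.1 - β₂ t.1|) +
    ∑' k : ℕ, (2 ^ k : ℝ)⁻¹ *
      ⨆ t : {t : ℝ // 2 ^ k ≤ |t| ∧ |t| ≤ 2 ^ (k + 1)}, |β₁ t.1 - β₂ t.1|

/-- The normalization `A_N = (∑_{k=1}^N |a_k|^α)^{1/α}`. -/
noncomputable def wA (α : ℝ) (a : ℕ → ℝ) (N : ℕ) : ℝ :=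
  (∑ k ∈ Finset.range N, |a k| ^ α) ^ (1 / α)

/-- The uniform asymptotic negligibility condition `max_{1≤k≤N} |a_k| = o(A_N)`. -/
def UAN (α : ℝ) (a : ℕ → ℝ) : Prop :=
  ∀ ε > (0 : ℝ), ∃ N₀ : ℕ, ∀ N ≥ N₀, ∀ k < N, |a k| ≤ ε * wA α a N

/-- `F` is a distribution function. -/
def IsDistFun (F : ℝ → ℝ) : Prop :=
  Monotone F ∧ Tendsto F atBot (𝓝 0) ∧ Tendsto F atTop (𝓝 1)

/-- `(X_n)` is a determining sequence: relative to any set `A` of positive probability, it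
has a limit distribution `F_A`. -/
def Determining {Ω : Type*} [MeasurableSpace Ω] (P : Measure Ω) (X : ℕ → Ω → ℝ) : Prop :=
  ∀ A : Set Ω, MeasurableSet A → P A ≠ 0 →
    ∃ F : ℝ → ℝ, IsDistFun F ∧
      ∀ t : ℝ, ContinuousAt F t →
        Tendsto (fun n => (P (A ∩ {ω | X n ω < t})).toReal / (P A).toReal) atTop (𝓝 (F t))

/-- `μ` is the limit random measure of the determining sequence `(X_n)`: a measurable map to
the probability measures on `ℝ` such that for every continuity point `t` of `F_Ω` the
indicators `1{X_n ≤ t}` converge weakly in `L^∞` to `μ(-∞, t]`. -/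
def IsLimitRandomMeasure {Ω : Type*} [MeasurableSpace Ω] (P : Measure Ω)
    (X : ℕ → Ω → ℝ) (μ : Ω → Measure ℝ) : Prop :=
  (∀ ω, IsProbabilityMeasure (μ ω)) ∧
  (∀ s : Set ℝ, MeasurableSet s → Measurable fun ω => μ ω s) ∧
  ∃ F : ℝ → ℝ, IsDistFun F ∧
    (∀ t : ℝ, ContinuousAt F t →
      Tendsto (fun n => (P {ω | X n ω < t}).toReal) atTop (𝓝 (F t))) ∧
    ∀ t : ℝ, ContinuousAt F t → ∀ η : Ω → ℝ, Integrable η P →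
      Tendsto (fun n => ∫ ω, ({ω' | X n ω' ≤ t}.indicator (fun _ => (1 : ℝ)) ω) * η ω ∂P)
        atTop (𝓝 (∫ ω, (μ ω (Set.Iic t)).toReal * η ω ∂P))

/-!
Testing the weak convergence against conditional laws shows that
`E[W exp(iuX_n)] → E[W φ(u)]` for every integrable `W`, where `φ` is the characteristic function
of the limit random measure. Choose the subsequence so sparse that each new variable is almost
independent, in this sense, of the finitely many products of characters of the earlier ones, with
an error that stays small for all frequencies `u` in a large compact set. The Lindeberg swapping of
`exp(iuX_k)` for `φ(u)`, one factor at a time and at `u = t/√N`, then costs in total `o(1)`: the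
characteristic function of the normalized sum is `E[φ(t/√N)^N] + o(1)`, also along further
subsequences.

The theorem thus reduces to i.i.d. sums. Once the mean `X₀` of `μ` is subtracted, a finite second
moment `Y` gives `φ(t/√N)^N → exp(-Yt²/2)`. Where the second moment is infinite, symmetrization and
Fatou's lemma give `N(1 - |φ(t/√N)|²) → ∞`, hence `φ(t/√N)^N → 0`; so
`E exp(-Yt²/2) ≤ P(∫ x² dμ < ∞)` for `t ≠ 0`, and `t → 0` leaves probability one.
-/

namespace SubsequenceCLT

open Complex ProbabilityTheory

lemma tendsto_of_tendsto_measureReal_Iic {D : Set ℝ} (hD : Dense D)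
    {ν : ℕ → ProbabilityMeasure ℝ} {ν' : ProbabilityMeasure ℝ}
    (h : ∀ t ∈ D, Tendsto (fun n => (ν n : Measure ℝ).real (Set.Iic t)) atTop
      (𝓝 ((ν' : Measure ℝ).real (Set.Iic t)))) :
    Tendsto ν atTop (𝓝 ν') := by
  refine (isPiSystem_Ioc_mem D D).tendsto_probabilityMeasure_of_tendsto_of_mem ?_ ?_ ?_
  · rintro _ ⟨a, -, b, -, -, rfl⟩
    exact measurableSet_Ioc
  · intro U hU x hx
    obtain ⟨l, r, hxlr, hlr⟩ := mem_nhds_iff_exists_Ioo_subset.1 (hU.mem_nhds hx)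
    obtain ⟨a, haD, hla, hax⟩ := hD.exists_between hxlr.1
    obtain ⟨b, hbD, hxb, hbr⟩ := hD.exists_between hxlr.2
    exact ⟨_, ⟨a, haD, b, hbD, hax.trans hxb, rfl⟩, Ioc_mem_nhds hax hxb,
      fun y hy => hlr ⟨hla.trans hy.1, hy.2.trans_lt hbr⟩⟩
  · rintro _ ⟨a, ha, b, hb, hab, rfl⟩
    have measureReal_Ioc (m : ProbabilityMeasure ℝ) : ((m (Set.Ioc a b) : NNReal) : ℝ)
        = (m : Measure ℝ).real (Set.Iic b) - (m : Measure ℝ).real (Set.Iic a) := by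
      rw [← Set.Iic_sdiff_Iic, ← measureReal_sdiff (Set.Iic_subset_Iic.2 hab.le) measurableSet_Iic]
      rfl
    rw [← NNReal.tendsto_coe]
    simpa only [measureReal_Ioc] using (h b hb).sub (h a ha)

lemma norm_exp_ofReal_mul_ofReal_mul_I (u x : ℝ) : ‖exp (u * x * I)‖ = 1 := by
  rw [← ofReal_mul, norm_exp_ofReal_mul_I]

section StableConvergence

variable {Ω : Type*} {mΩ : MeasurableSpace Ω} {P : Measure Ω} {X : ℕ → Ω → ℝ} {κ : Kernel Ω ℝ}

lemma tendsto_integral_mul_of_tendsto_setIntegral {g : ℕ → Ω → ℂ} {h : Ω → ℂ}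
    (hg : ∀ n, AEStronglyMeasurable (g n) P) (hg_le : ∀ n ω, ‖g n ω‖ ≤ 1)
    (hh : AEStronglyMeasurable h P) (hh_le : ∀ ω, ‖h ω‖ ≤ 1)
    (hgh : ∀ A, MeasurableSet A → P A < ∞ →
      Tendsto (fun n => ∫ ω in A, g n ω ∂P) atTop (𝓝 (∫ ω in A, h ω ∂P)))
    {W : Ω → ℂ} (hW : Integrable W P) :
    Tendsto (fun n => ∫ ω, W ω * g n ω ∂P) atTop (𝓝 (∫ ω, W ω * h ω ∂P)) := by
  have integrable_mul {W k : Ω → ℂ} (hW : Integrable W P) (hk : AEStronglyMeasurable k P)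
      (hk_le : ∀ ω, ‖k ω‖ ≤ 1) : Integrable (fun ω => W ω * k ω) P :=
    hW.mul_bdd hk (.of_forall hk_le)
  have lipschitz {k : Ω → ℂ} (hk : AEStronglyMeasurable k P) (hk_le : ∀ ω, ‖k ω‖ ≤ 1) :
      LipschitzWith 1 fun W : Ω →₁[P] ℂ => ∫ ω, W ω * k ω ∂P := by
    refine LipschitzWith.of_dist_le_mul fun V W => ?_
    rw [dist_eq_norm, ← integral_sub (integrable_mul (L1.integrable_coeFn V) hk hk_le)
      (integrable_mul (L1.integrable_coeFn W) hk hk_le), NNReal.coe_one, one_mul,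
      L1.dist_eq_integral_dist]
    refine norm_integral_le_of_norm_le ?_ (.of_forall fun ω => ?_)
    · simp_rw [dist_eq_norm]
      exact ((L1.integrable_coeFn V).sub (L1.integrable_coeFn W)).norm
    · rw [← sub_mul, norm_mul, dist_eq_norm]
      exact mul_le_of_le_one_right (norm_nonneg _) (hk_le ω)
  refine Integrable.induction
    (fun W : Ω → ℂ => Tendsto (fun n => ∫ ω, W ω * g n ω ∂P) atTop (𝓝 (∫ ω, W ω * h ω ∂P)))
    (fun c A hA hPA => ?_) (fun V W _ hV hW hVt hWt => ?_) ?_ (fun V W hVW _ hVt => ?_) hW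
  · have integral_indicator_mul (k : Ω → ℂ) :
        ∫ ω, A.indicator (fun _ => c) ω * k ω ∂P = c * ∫ ω in A, k ω ∂P := by
      simp_rw [← integral_const_mul, ← integral_indicator hA, ← Set.indicator_mul_left]
    simpa only [integral_indicator_mul] using (hgh A hA hPA).const_mul c
  · simp_rw [Pi.add_apply, add_mul, integral_add (integrable_mul hV hh hh_le)
      (integrable_mul hW hh hh_le), integral_add (integrable_mul hV (hg _) (hg_le _))
      (integrable_mul hW (hg _) (hg_le _))]
    exact hVt.add hWt
  · exact (LipschitzWith.uniformEquicontinuous _ 1 fun n => lipschitz (hg n) (hg_le n))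
      |>.equicontinuous.isClosed_setOfPred_tendsto (lipschitz hh hh_le).continuous
  · have integral_mul_congr (k : Ω → ℂ) : ∫ ω, W ω * k ω ∂P = ∫ ω, V ω * k ω ∂P :=
      integral_congr_ae (hVW.symm.mul .rfl)
    simpa only [integral_mul_congr] using hVt

lemma charFun_map_eq_integral {Z : Ω → ℝ} (hZ : AEMeasurable Z P) (u : ℝ) :
    charFun (P.map Z) u = ∫ ω, exp (u * Z ω * I) ∂P := by
  rw [charFun_apply_real, integral_map hZ (by fun_prop)]

lemma charFun_comp_measure [IsFiniteMeasure P] [IsMarkovKernel κ] (u : ℝ) :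
    charFun (κ ∘ₘ P) u = ∫ ω, charFun (κ ω) u ∂P := by
  simp_rw [charFun_apply_real]
  have integrable_exp : Integrable (fun x : ℝ => exp (u * x * I)) (κ ∘ₘ P) :=
    .of_bound (by fun_prop) 1 (.of_forall fun x => (norm_exp_ofReal_mul_ofReal_mul_I u x).le)
  rw [Measure.comp_eq_comp_const_apply] at integrable_exp ⊢
  rw [Kernel.integral_comp integrable_exp, Kernel.const_apply]

lemma measurable_charFun_kernel [IsSFiniteKernel κ] (u : ℝ) :
    Measurable fun ω => charFun (κ ω) u := by
  simp_rw [charFun_apply_real]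
  exact (StronglyMeasurable.integral_kernel (κ := κ)
    (Continuous.stronglyMeasurable (by fun_prop))).measurable

/-- Stable convergence of `X n` to the random measure `κ`, expressed through characteristic
functions: relative to every integrable weight `W`, the law of `X n` converges to the
`W`-mixture of the measures `κ ω`. -/
def StableTendsto (P : Measure Ω) (X : ℕ → Ω → ℝ) (κ : Kernel Ω ℝ) : Prop :=
  ∀ W : Ω → ℂ, Integrable W P → ∀ u : ℝ,
    Tendsto (fun n => ∫ ω, W ω * exp (u * X n ω * I) ∂P) atTop
      (𝓝 (∫ ω, W ω * charFun (κ ω) u ∂P))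

lemma StableTendsto.comp (h : StableTendsto P X κ) {m : ℕ → ℕ} (hm : Tendsto m atTop atTop) :
    StableTendsto P (fun k => X (m k)) κ :=
  fun W hW u => (h W hW u).comp hm

lemma measureReal_comp_measure [IsFiniteMeasure P] [IsMarkovKernel κ] {B : Set ℝ}
    (hB : MeasurableSet B) : (κ ∘ₘ P).real B = ∫ ω, (κ ω).real B ∂P := by
  simp_rw [measureReal_def]
  rw [Measure.bind_apply hB κ.aemeasurable, integral_toReal (κ.measurable_coe hB).aemeasurable
    (.of_forall fun ω => measure_lt_top _ _)]

lemma tendsto_integral_exp_of_tendsto_measureReal_le [IsProbabilityMeasure P] [IsMarkovKernel κ]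
    (hX : ∀ n, Measurable (X n)) {D : Set ℝ} (hD : Dense D)
    (h : ∀ t ∈ D, Tendsto (fun n => P.real {ω | X n ω ≤ t}) atTop
      (𝓝 (∫ ω, (κ ω).real (Set.Iic t) ∂P))) (u : ℝ) :
    Tendsto (fun n => ∫ ω, exp (u * X n ω * I) ∂P) atTop (𝓝 (∫ ω, charFun (κ ω) u ∂P)) := by
  let ν (n : ℕ) : ProbabilityMeasure ℝ :=
    ⟨P.map (X n), Measure.isProbabilityMeasure_map (hX n).aemeasurable⟩
  let ν' : ProbabilityMeasure ℝ := ⟨κ ∘ₘ P, inferInstance⟩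
  have tendsto_law : Tendsto ν atTop (𝓝 ν') := by
    refine tendsto_of_tendsto_measureReal_Iic hD fun t ht => ?_
    simp only [ν, ν', ProbabilityMeasure.coe_mk, measureReal_comp_measure measurableSet_Iic,
      map_measureReal_apply (hX _) measurableSet_Iic]
    exact h t ht
  simpa only [ν, ν', ProbabilityMeasure.coe_mk, charFun_map_eq_integral (hX _).aemeasurable,
    charFun_comp_measure] using
    ProbabilityMeasure.tendsto_iff_tendsto_charFun.1 tendsto_law u

lemma dense_continuousAt_of_monotone {F : ℝ → ℝ} (hF : Monotone F) :
    Dense {t | ContinuousAt F t} := by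
  simpa only [Set.compl_ofPred, not_not] using hF.countable_not_continuousAt.dense_compl ℝ

lemma stableTendsto_of_isLimitRandomMeasure [IsFiniteMeasure P] [IsMarkovKernel κ]
    (hX : ∀ n, Measurable (X n)) (h : IsLimitRandomMeasure P X κ) : StableTendsto P X κ := by
  obtain ⟨-, -, F, hF, -, hconv⟩ := h
  intro W hW u
  refine tendsto_integral_mul_of_tendsto_setIntegral (fun n => ?_)
    (fun n ω => (norm_exp_ofReal_mul_ofReal_mul_I _ _).le)
    (measurable_charFun_kernel u).aestronglyMeasurable
    (fun ω => norm_charFun_le_one u) (fun A hA _ => ?_) hW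
  · have := hX n
    exact Measurable.aestronglyMeasurable (by fun_prop)
  rcases eq_or_ne (P A) 0 with hPA | hPA
  · simp [Measure.restrict_eq_zero.2 hPA]
  have : IsProbabilityMeasure P[|A] := cond_isProbabilityMeasure hPA
  have integral_cond {E : Type} [NormedAddCommGroup E] [NormedSpace ℝ E] (f : Ω → E) :
      ∫ ω, f ω ∂P[|A] = (P A)⁻¹.toReal • ∫ ω in A, f ω ∂P := integral_smul_measure f _
  have tendsto_cond : Tendsto (fun n => ∫ ω, exp (u * X n ω * I) ∂P[|A]) atTop
      (𝓝 (∫ ω, charFun (κ ω) u ∂P[|A])) := by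
    refine tendsto_integral_exp_of_tendsto_measureReal_le hX
      (dense_continuousAt_of_monotone hF.1) (fun t ht => ?_) u
    have integral_mul_indicator (f : Ω → ℝ) :
        ∫ ω, f ω * A.indicator 1 ω ∂P = ∫ ω in A, f ω ∂P := by
      simp only [← Set.indicator_mul_right, Pi.one_apply, mul_one, integral_indicator hA]
    have hle n : MeasurableSet {ω | X n ω ≤ t} := hX n measurableSet_Iic
    simp_rw [← integral_indicator_one (hle _), integral_cond, ← integral_mul_indicator]
    exact (hconv t ht (A.indicator 1) ((integrable_const 1).indicator hA)).const_smul _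
  have hPA' : (P A)⁻¹.toReal ≠ 0 := ENNReal.toReal_ne_zero.2
    ⟨ENNReal.inv_ne_zero.2 (measure_ne_top P A), ENNReal.inv_ne_top.2 hPA⟩
  simpa only [integral_cond, inv_smul_smul₀ hPA'] using tendsto_cond.const_smul (P A)⁻¹.toReal⁻¹

/-- The law of `x - X₀ ω` when `x` is distributed according to `κ ω`. -/
noncomputable def shiftKernel (κ : Kernel Ω ℝ) (X₀ : Ω → ℝ) : Kernel Ω ℝ :=
  (Kernel.id ×ₖ κ).map fun p => p.2 - X₀ p.1

lemma shiftKernel_apply [IsSFiniteKernel κ] {X₀ : Ω → ℝ} (hX₀ : Measurable X₀) (ω : Ω) :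
    shiftKernel κ X₀ ω = (κ ω).map (fun x => x - X₀ ω) := by
  rw [shiftKernel, Kernel.map_apply _ (by fun_prop), Kernel.prod_apply, Kernel.id_apply,
    Measure.dirac_prod, Measure.map_map (by fun_prop) (by fun_prop)]
  rfl

lemma isMarkovKernel_shiftKernel [IsMarkovKernel κ] {X₀ : Ω → ℝ} (hX₀ : Measurable X₀) :
    IsMarkovKernel (shiftKernel κ X₀) :=
  Kernel.IsMarkovKernel.map _ (by fun_prop)

lemma charFun_shiftKernel [IsSFiniteKernel κ] {X₀ : Ω → ℝ} (hX₀ : Measurable X₀) (ω : Ω) (u : ℝ) :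
    charFun (shiftKernel κ X₀ ω) u = charFun (κ ω) u * exp (-(u * X₀ ω * I)) := by
  simp_rw [shiftKernel_apply hX₀, sub_eq_add_neg]
  rw [charFun_map_add_const]
  simp

lemma StableTendsto.sub (h : StableTendsto P X κ) [IsSFiniteKernel κ] {X₀ : Ω → ℝ}
    (hX₀ : Measurable X₀) :
    StableTendsto P (fun n ω => X n ω - X₀ ω) (shiftKernel κ X₀) := by
  intro W hW u
  have hWX₀ : Integrable (fun ω => W ω * exp (-(u * X₀ ω * I))) P := by
    refine hW.mul_bdd (c := 1) (Measurable.aestronglyMeasurable (by fun_prop))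
      (.of_forall fun ω => ?_)
    simpa using (norm_exp_ofReal_mul_ofReal_mul_I (-u) (X₀ ω)).le
  have exp_sub (n : ℕ) (ω : Ω) : exp (u * (X n ω - X₀ ω : ℝ) * I)
      = exp (-(u * X₀ ω * I)) * exp (u * X n ω * I) := by
    rw [← Complex.exp_add]
    push_cast
    ring_nf
  simp_rw [exp_sub, charFun_shiftKernel hX₀, mul_comm (charFun _ _), ← mul_assoc]
  exact h _ hWX₀ u

lemma memLp_id_shiftKernel_iff [IsMarkovKernel κ] {X₀ : Ω → ℝ} (hX₀ : Measurable X₀) {ω : Ω}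
    {p : ℝ≥0∞} :
    MemLp id p (shiftKernel κ X₀ ω) ↔ MemLp id p (κ ω) := by
  rw [shiftKernel_apply hX₀, memLp_map_measure_iff (by fun_prop) (by fun_prop)]
  refine ⟨fun h => ?_, fun h => h.sub (memLp_const (X₀ ω))⟩
  convert! h.add (memLp_const (X₀ ω)) using 1
  ext x
  simp

lemma memLp_id_two_iff_lintegral_lt_top {ν : Measure ℝ} :
    MemLp id 2 ν ↔ ∫⁻ x, ENNReal.ofReal (x ^ 2) ∂ν < ⊤ := by
  rw [memLp_two_iff_integrable_sq (by fun_prop),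
    ← hasFiniteIntegral_iff_ofReal (.of_forall fun x => sq_nonneg x)]
  exact and_iff_right (by fun_prop)

lemma measurableSet_memLp_id_two : MeasurableSet {ω | MemLp id 2 (κ ω)} := by
  simp_rw [memLp_id_two_iff_lintegral_lt_top]
  exact measurableSet_lt (Measurable.lintegral_kernel (by fun_prop)) measurable_const

lemma tendsto_integral_norm_sub_of_continuous [IsFiniteMeasure P] {g : ℝ → Ω → ℂ} {C : ℝ}
    (hg : ∀ u, Measurable (g u)) (hg_le : ∀ u ω, ‖g u ω‖ ≤ C)
    (hg_cont : ∀ ω, Continuous fun u => g u ω) (u₀ : ℝ) :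
    Tendsto (fun u => ∫ ω, ‖g u ω - g u₀ ω‖ ∂P) (𝓝 u₀) (𝓝 0) := by
  have h := tendsto_integral_filter_of_dominated_convergence (μ := P) (l := 𝓝 u₀)
    (F := fun u ω => ‖g u ω - g u₀ ω‖) (f := fun _ => 0) (fun _ => C + C)
    (.of_forall fun u => ((hg u).sub (hg u₀)).norm.aestronglyMeasurable)
    (.of_forall fun u => .of_forall fun ω => ?_) (integrable_const _) (.of_forall fun ω => ?_)
  · simpa using h
  · rw [norm_norm]
    exact norm_sub_le_of_le (hg_le u ω) (hg_le u₀ ω)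
  · exact tendsto_iff_norm_sub_tendsto_zero.1 (hg_cont ω).continuousAt

lemma norm_exp_sub_exp_eq (u v x : ℝ) :
    ‖exp (u * x * I) - exp (v * x * I)‖ = ‖exp ((u - v : ℝ) * x * I) - 1‖ := by
  have exp_eq : exp (u * x * I) = exp ((u - v : ℝ) * x * I) * exp (v * x * I) := by
    rw [← Complex.exp_add]
    push_cast
    ring_nf
  rw [exp_eq, ← sub_one_mul, norm_mul, norm_exp_ofReal_mul_ofReal_mul_I, mul_one]

lemma norm_exp_sub_one_le_min {u δ x : ℝ} (hu : |u| ≤ δ) :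
    ‖exp (u * x * I) - 1‖ ≤ min 2 (δ * |x|) := by
  refine le_min ((norm_sub_le _ _).trans ?_) ?_
  · rw [norm_exp_ofReal_mul_ofReal_mul_I, norm_one, one_add_one_eq_two]
  · rw [← ofReal_mul, mul_comm _ I]
    refine (Real.norm_exp_I_mul_ofReal_sub_one_le (x := u * x)).trans ?_
    rw [Real.norm_eq_abs, abs_mul]
    gcongr

lemma norm_min_two_mul_abs_le {δ : ℝ} (hδ : 0 ≤ δ) (x : ℝ) : ‖min 2 (δ * |x|)‖ ≤ 2 := by
  rw [Real.norm_of_nonneg (by positivity)]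
  exact min_le_left _ _

lemma tendsto_integral_min_two_mul_abs (ν : Measure ℝ) [IsFiniteMeasure ν] :
    Tendsto (fun δ : ℝ => ∫ x, min 2 (δ * |x|) ∂ν) (𝓝[>] 0) (𝓝 0) := by
  have pointwise (x : ℝ) : Tendsto (fun δ : ℝ => min 2 (δ * |x|)) (𝓝[>] 0) (𝓝 0) := by
    have : Continuous fun δ : ℝ => min 2 (δ * |x|) := by fun_prop
    simpa using (this.tendsto 0).mono_left nhdsWithin_le_nhds
  have h := tendsto_integral_filter_of_dominated_convergence (μ := ν) (l := 𝓝[>] (0 : ℝ))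
    (fun _ => 2) (.of_forall fun δ => Continuous.aestronglyMeasurable (by fun_prop))
    (eventually_mem_nhdsWithin.mono fun δ hδ => .of_forall fun x =>
      norm_min_two_mul_abs_le (le_of_lt hδ) x)
    (integrable_const _) (.of_forall pointwise)
  rwa [integral_zero] at h

lemma tendsto_integral_norm_exp_sub_one_of_tendsto {ι : Type*} {l : Filter ι}
    {ν : ι → ProbabilityMeasure ℝ} {ν' : ProbabilityMeasure ℝ} (h : Tendsto ν l (𝓝 ν')) :
    Tendsto (fun q : ι × ℝ => ∫ x, ‖exp (q.2 * x * I) - 1‖ ∂(ν q.1 : Measure ℝ)) (l ×ˢ 𝓝 0)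
      (𝓝 0) := by
  refine tendsto_order.2 ⟨fun a ha => .of_forall fun q =>
    ha.trans_le (integral_nonneg fun x => norm_nonneg _), fun ε hε => ?_⟩
  obtain ⟨δ, hδε, hδ : 0 < δ⟩ := (((tendsto_integral_min_two_mul_abs ν').eventually_lt_const hε).and
    eventually_mem_nhdsWithin).exists
  let f : ℝ →ᵇ ℝ := .ofNormedAddCommGroup (fun x => min 2 (δ * |x|)) (by fun_prop) 2
    (norm_min_two_mul_abs_le hδ.le)
  have eventually_lt : ∀ᶠ i in l, ∫ x, f x ∂(ν i : Measure ℝ) < ε :=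
    (ProbabilityMeasure.tendsto_iff_forall_integral_tendsto.1 h f).eventually_lt_const hδε
  filter_upwards [eventually_lt.prod_mk (Metric.closedBall_mem_nhds (0 : ℝ) hδ)] with q hq
  refine (integral_mono_of_nonneg (.of_forall fun x => norm_nonneg _)
    (f.integrable _) (.of_forall fun x => ?_)).trans_lt hq.1
  exact norm_exp_sub_one_le_min (by simpa using hq.2)

/-- The difference between the character `exp (i u X)` of a random variable and the
characteristic function of the random measure `κ`. -/
noncomputable def charDeviation (κ : Kernel Ω ℝ) (X : Ω → ℝ) (u : ℝ) (ω : Ω) : ℂ :=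
  exp (u * X ω * I) - charFun (κ ω) u

lemma measurable_charDeviation [IsSFiniteKernel κ] {Z : Ω → ℝ} (hZ : Measurable Z) (u : ℝ) :
    Measurable (charDeviation κ Z u) :=
  Measurable.sub (by fun_prop) (measurable_charFun_kernel u)

lemma norm_charDeviation_le [IsMarkovKernel κ] (Z : Ω → ℝ) (u : ℝ) (ω : Ω) :
    ‖charDeviation κ Z u ω‖ ≤ 2 := by
  rw [← one_add_one_eq_two]
  exact norm_sub_le_of_le (norm_exp_ofReal_mul_ofReal_mul_I _ _).le (norm_charFun_le_one u)

lemma charDeviation_zero [IsMarkovKernel κ] (Z : Ω → ℝ) (ω : Ω) : charDeviation κ Z 0 ω = 0 := by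
  simp [charDeviation]

lemma continuous_charDeviation [IsMarkovKernel κ] (Z : Ω → ℝ) (ω : Ω) :
    Continuous fun u => charDeviation κ Z u ω :=
  Continuous.sub (by fun_prop) continuous_charFun

lemma integrable_charDeviation [IsFiniteMeasure P] [IsMarkovKernel κ] {Z : Ω → ℝ}
    (hZ : Measurable Z) (u : ℝ) : Integrable (charDeviation κ Z u) P :=
  .of_bound (measurable_charDeviation hZ u).aestronglyMeasurable 2
    (.of_forall fun ω => norm_charDeviation_le Z u ω)

section MarkovKernel

variable [IsMarkovKernel κ]

lemma StableTendsto.tendsto_integral_mul_charDeviation (h : StableTendsto P X κ)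
    (hX : ∀ n, Measurable (X n)) {W : Ω → ℂ} (hW : Integrable W P) (u : ℝ) :
    Tendsto (fun n => ∫ ω, W ω * charDeviation κ (X n) u ω ∂P) atTop (𝓝 0) := by
  have integrable_exp (n : ℕ) : Integrable (fun ω => W ω * exp (u * X n ω * I)) P := by
    have := hX n
    exact hW.mul_bdd (Measurable.aestronglyMeasurable (by fun_prop))
      (.of_forall fun ω => (norm_exp_ofReal_mul_ofReal_mul_I _ _).le)
  have integrable_charFun : Integrable (fun ω => W ω * charFun (κ ω) u) P :=
    hW.mul_bdd (measurable_charFun_kernel u).aestronglyMeasurable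
      (.of_forall fun ω => norm_charFun_le_one u)
  simp only [charDeviation, mul_sub, integral_sub (integrable_exp _) integrable_charFun]
  simpa only [sub_self] using (h W hW u).sub_const (∫ ω, W ω * charFun (κ ω) u ∂P)

lemma norm_integral_mul_charDeviation_sub_le [IsFiniteMeasure P] {Z : Ω → ℝ}
    (hZ : Measurable Z) {V W : Ω → ℂ} (hV : Measurable V) (hW : Measurable W)
    (hV_le : ∀ ω, ‖V ω‖ ≤ 1) (hW_le : ∀ ω, ‖W ω‖ ≤ 1) (u v : ℝ) :
    ‖∫ ω, V ω * charDeviation κ Z u ω ∂P - ∫ ω, W ω * charDeviation κ Z v ω ∂P‖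
      ≤ 2 * ∫ ω, ‖V ω - W ω‖ ∂P
        + ∫ ω, ‖charDeviation κ Z u ω - charDeviation κ Z v ω‖ ∂P := by
  have integrable_mul {V : Ω → ℂ} (hV : Measurable V) (hV_le : ∀ ω, ‖V ω‖ ≤ 1) (u : ℝ) :
      Integrable (fun ω => V ω * charDeviation κ Z u ω) P :=
    (integrable_charDeviation hZ u).bdd_mul hV.aestronglyMeasurable (.of_forall hV_le)
  have integrable_sub : Integrable (fun ω => V ω - W ω) P :=
    .of_bound (hV.sub hW).aestronglyMeasurable (1 + 1)
      (.of_forall fun ω => norm_sub_le_of_le (hV_le ω) (hW_le ω))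
  have integrable_dev :
      Integrable (fun ω => charDeviation κ Z u ω - charDeviation κ Z v ω) P :=
    (integrable_charDeviation hZ u).sub (integrable_charDeviation hZ v)
  rw [← integral_sub (integrable_mul hV hV_le u) (integrable_mul hW hW_le v),
    ← integral_const_mul, ← integral_add (integrable_sub.norm.const_mul 2) integrable_dev.norm]
  refine norm_integral_le_of_norm_le ((integrable_sub.norm.const_mul 2).add integrable_dev.norm)
    (.of_forall fun ω => ?_)
  calc ‖V ω * charDeviation κ Z u ω - W ω * charDeviation κ Z v ω‖
      = ‖charDeviation κ Z u ω * (V ω - W ω)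
        + W ω * (charDeviation κ Z u ω - charDeviation κ Z v ω)‖ := by ring_nf
    _ ≤ 2 * ‖V ω - W ω‖ + 1 * ‖charDeviation κ Z u ω - charDeviation κ Z v ω‖ := by
      refine norm_add_le_of_le ?_ ?_ <;> rw [norm_mul]
      · gcongr
        exact norm_charDeviation_le Z u ω
      · gcongr
        exact hW_le ω
    _ = _ := by rw [one_mul]

section ProbabilityMeasure

variable [IsProbabilityMeasure P]

lemma StableTendsto.tendsto_integral_norm_exp_sub_one (h : StableTendsto P X κ)
    (hX : ∀ n, Measurable (X n)) :
    Tendsto (fun q : ℕ × ℝ => ∫ ω, ‖exp (q.2 * X q.1 ω * I) - 1‖ ∂P) (atTop ×ˢ 𝓝 0) (𝓝 0) := by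
  let ν (n : ℕ) : ProbabilityMeasure ℝ :=
    ⟨P.map (X n), Measure.isProbabilityMeasure_map (hX n).aemeasurable⟩
  let ν' : ProbabilityMeasure ℝ := ⟨κ ∘ₘ P, inferInstance⟩
  have tendsto_law : Tendsto ν atTop (𝓝 ν') := by
    refine ProbabilityMeasure.tendsto_iff_tendsto_charFun.2 fun u => ?_
    simp only [ν, ν', ProbabilityMeasure.coe_mk, charFun_map_eq_integral (hX _).aemeasurable,
      charFun_comp_measure]
    simpa only [one_mul] using h (fun _ => 1) (integrable_const 1) u
  have integral_law (n : ℕ) (u : ℝ) : ∫ x, ‖exp (u * x * I) - 1‖ ∂(ν n : Measure ℝ)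
      = ∫ ω, ‖exp (u * X n ω * I) - 1‖ ∂P :=
    integral_map (hX n).aemeasurable (Continuous.aestronglyMeasurable (by fun_prop))
  simpa only [integral_law] using tendsto_integral_norm_exp_sub_one_of_tendsto tendsto_law

lemma StableTendsto.tendsto_integral_norm_charDeviation_sub (h : StableTendsto P X κ)
    (hX : ∀ n, Measurable (X n)) (u₀ : ℝ) :
    Tendsto (fun q : ℕ × ℝ =>
      ∫ ω, ‖charDeviation κ (X q.1) q.2 ω - charDeviation κ (X q.1) u₀ ω‖ ∂P)
      (atTop ×ˢ 𝓝 u₀) (𝓝 0) := by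
  have sub_tendsto : Tendsto (fun q : ℕ × ℝ => (q.1, q.2 - u₀)) (atTop ×ˢ 𝓝 u₀) (atTop ×ˢ 𝓝 0) :=
    tendsto_fst.prodMk ((tendsto_snd (f := atTop)).sub_const u₀ |>.trans (by simp))
  have bound := ((h.tendsto_integral_norm_exp_sub_one hX).comp sub_tendsto).add
    ((tendsto_integral_norm_sub_of_continuous (P := P) measurable_charFun_kernel
      (fun u ω => norm_charFun_le_one (μ := κ ω) u) (fun ω => continuous_charFun) u₀).comp
      tendsto_snd)
  rw [add_zero] at bound
  refine squeeze_zero (fun q => integral_nonneg fun ω => norm_nonneg _) (fun q => ?_) bound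
  have hXq := hX q.1
  have integrable_exp : Integrable (fun ω => exp ((q.2 - u₀ : ℝ) * X q.1 ω * I) - 1) P :=
    .of_bound (Measurable.aestronglyMeasurable (by fun_prop)) (1 + 1) (.of_forall fun ω =>
      norm_sub_le_of_le (norm_exp_ofReal_mul_ofReal_mul_I _ _).le norm_one.le)
  have integrable_charFun : Integrable (fun ω => charFun (κ ω) q.2 - charFun (κ ω) u₀) P :=
    .of_bound ((measurable_charFun_kernel _).sub (measurable_charFun_kernel _)).aestronglyMeasurable
      (1 + 1) (.of_forall fun ω =>
        norm_sub_le_of_le (norm_charFun_le_one _) (norm_charFun_le_one _))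
  rw [Function.comp_apply, Function.comp_apply,
    ← integral_add integrable_exp.norm integrable_charFun.norm]
  refine integral_mono_of_nonneg (.of_forall fun ω => norm_nonneg _)
    (integrable_exp.norm.add integrable_charFun.norm) (.of_forall fun ω => ?_)
  simp only [charDeviation, ← norm_exp_sub_exp_eq, sub_sub_sub_comm _ (charFun (κ ω) q.2)]
  exact norm_sub_le _ _

lemma StableTendsto.tendsto_integral_mul_charDeviation_prod (h : StableTendsto P X κ)
    (hX : ∀ n, Measurable (X n)) {W : ℝ → Ω → ℂ} (hW : ∀ u, Measurable (W u))
    (hW_le : ∀ u ω, ‖W u ω‖ ≤ 1) (hW_cont : ∀ ω, Continuous fun u => W u ω) (u₀ : ℝ) :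
    Tendsto (fun q : ℕ × ℝ => ∫ ω, W q.2 ω * charDeviation κ (X q.1) q.2 ω ∂P) (atTop ×ˢ 𝓝 u₀)
      (𝓝 0) := by
  have at_point := (h.tendsto_integral_mul_charDeviation hX (W := W u₀)
    (.of_bound (hW u₀).aestronglyMeasurable 1 (.of_forall (hW_le u₀))) u₀).comp
    (tendsto_fst (g := 𝓝 u₀))
  have oscillation := (((tendsto_integral_norm_sub_of_continuous (P := P) hW hW_le hW_cont u₀).comp
    (tendsto_snd (f := atTop (α := ℕ)))).const_mul 2).add
    (h.tendsto_integral_norm_charDeviation_sub hX u₀)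
  rw [mul_zero, add_zero] at oscillation
  have difference := squeeze_zero_norm (fun q : ℕ × ℝ => norm_integral_mul_charDeviation_sub_le
    (P := P) (κ := κ) (hX q.1) (hW q.2) (hW u₀) (hW_le q.2) (hW_le u₀) q.2 u₀) oscillation
  simpa using difference.add at_point

end ProbabilityMeasure

end MarkovKernel

lemma prod_range_sub_pow_eq_sum {R : Type*} [CommRing R] (a : ℕ → R) (c : R) (N : ℕ) :
    ∏ k ∈ Finset.range N, a k - c ^ N
      = ∑ k ∈ Finset.range N, (∏ l ∈ Finset.range k, a l) * c ^ (N - 1 - k) * (a k - c) := by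
  have h_telescope := Finset.sum_range_sub
    (fun k => (∏ l ∈ Finset.range k, a l) * c ^ (N - k)) N
  simp only [Nat.sub_self, pow_zero, mul_one, Finset.prod_range_zero, one_mul, Nat.sub_zero]
    at h_telescope
  rw [← h_telescope]
  refine Finset.sum_congr rfl fun k hk => ?_
  obtain ⟨d, rfl⟩ := Nat.exists_eq_add_of_lt (Finset.mem_range.1 hk)
  rw [Finset.prod_range_succ, show k + d + 1 - (k + 1) = d by omega,
    show k + d + 1 - k = d + 1 by omega, show k + d + 1 - 1 - k = d by omega]
  ring

/-- The weight multiplying `charDeviation κ (X i) u` in the error made when `exp (i u X_i)` is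
replaced by `charFun (κ ω) u` in a product of characters: the variables `X l`, `l ∈ S`, still
contribute their characters, while `p` other factors have already been replaced. -/
noncomputable def swapWeight (X : ℕ → Ω → ℝ) (κ : Kernel Ω ℝ) (S : Finset ℕ) (p : ℕ) (u : ℝ)
    (ω : Ω) : ℂ :=
  (∏ l ∈ S, exp (u * X l ω * I)) * charFun (κ ω) u ^ p

/-- The expected error made by a single replacement of `exp (i u X_i)` by `charFun (κ ω) u`;
see `swapWeight` for the meaning of `S` and `p`. -/
noncomputable def swapError (P : Measure Ω) (X : ℕ → Ω → ℝ) (κ : Kernel Ω ℝ) (S : Finset ℕ)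
    (i p : ℕ) (u : ℝ) : ℂ :=
  ∫ ω, swapWeight X κ S p u ω * charDeviation κ (X i) u ω ∂P

/-- Along the index sequence `j`, the errors of successive replacements are small enough to be
summable: the error for `X (j b)` is exponentially small in every earlier index `j a`, uniformly
over the earlier variables kept in the product and over the range of `p` and `u` on which
`(p + 1) u²` is at most `j a`. -/
def HasSmallSwapErrors (P : Measure Ω) (X : ℕ → Ω → ℝ) (κ : Kernel Ω ℝ) (j : ℕ → ℕ) : Prop :=
  ∀ a b, a < b → ∀ S ⊆ Finset.range (j a + 1), ∀ (p : ℕ) (u : ℝ), (p + 1) * u ^ 2 ≤ j a →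
    ‖swapError P X κ S (j b) p u‖ ≤ (1 / 2) ^ j a

lemma HasSmallSwapErrors.comp {j m : ℕ → ℕ} (h : HasSmallSwapErrors P X κ j) (hm : StrictMono m) :
    HasSmallSwapErrors P X κ (j ∘ m) :=
  fun a b hab => h (m a) (m b) (hm hab)

lemma measurable_swapWeight [IsSFiniteKernel κ] (hX : ∀ n, Measurable (X n)) (S : Finset ℕ)
    (p : ℕ) (u : ℝ) :
    Measurable (swapWeight X κ S p u) :=
  (Finset.measurable_fun_prod S fun l _ => by have := hX l; fun_prop).mul
    ((measurable_charFun_kernel u).pow_const p)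

lemma continuous_swapWeight [IsFiniteKernel κ] (S : Finset ℕ) (p : ℕ) (ω : Ω) :
    Continuous fun u => swapWeight X κ S p u ω :=
  (continuous_finsetProd S fun l _ => by fun_prop).mul (continuous_charFun.pow p)

variable [IsMarkovKernel κ]

lemma norm_swapWeight_le (S : Finset ℕ) (p : ℕ) (u : ℝ) (ω : Ω) :
    ‖swapWeight X κ S p u ω‖ ≤ 1 := by
  simp only [swapWeight, norm_mul, norm_prod, norm_exp_ofReal_mul_ofReal_mul_I,
    Finset.prod_const_one, one_mul, norm_pow]
  exact pow_le_one₀ (norm_nonneg _) (norm_charFun_le_one u)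

section FiniteMeasure

variable [IsFiniteMeasure P]

lemma integrable_swapWeight_mul_charDeviation (hX : ∀ n, Measurable (X n)) (S : Finset ℕ)
    (i p : ℕ) (u : ℝ) :
    Integrable (fun ω => swapWeight X κ S p u ω * charDeviation κ (X i) u ω) P :=
  (integrable_charDeviation (hX i) u).bdd_mul (measurable_swapWeight hX S p u).aestronglyMeasurable
    (.of_forall (norm_swapWeight_le S p u))

lemma norm_swapError_le (hX : ∀ n, Measurable (X n)) (S : Finset ℕ) (i p : ℕ) (u : ℝ) :
    ‖swapError P X κ S i p u‖ ≤ ∫ ω, ‖charDeviation κ (X i) u ω‖ ∂P := by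
  refine norm_integral_le_of_norm_le (integrable_charDeviation (hX i) u).norm
    (.of_forall fun ω => ?_)
  rw [norm_mul]
  exact mul_le_of_le_one_left (norm_nonneg _) (norm_swapWeight_le S p u ω)

lemma tendsto_integral_norm_charDeviation_nhds_zero {Z : Ω → ℝ} (hZ : Measurable Z) :
    Tendsto (fun u => ∫ ω, ‖charDeviation κ Z u ω‖ ∂P) (𝓝 0) (𝓝 0) := by
  simpa only [charDeviation_zero, sub_zero] using tendsto_integral_norm_sub_of_continuous (P := P)
    (measurable_charDeviation (κ := κ) hZ) (norm_charDeviation_le Z) (continuous_charDeviation Z) 0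

lemma integral_prod_exp_sub_integral_charFun_pow_eq_sum
    (hX : ∀ n, Measurable (X n)) {j : ℕ → ℕ} (hj : j.Injective) (N : ℕ) (u : ℝ) :
    ∫ ω, ∏ k ∈ Finset.range N, exp (u * X (j k) ω * I) ∂P - ∫ ω, charFun (κ ω) u ^ N ∂P
      = ∑ k ∈ Finset.range N,
        swapError P X κ ((Finset.range k).image j) (j k) (N - 1 - k) u := by
  have integrable_prod : Integrable (fun ω => ∏ k ∈ Finset.range N, exp (u * X (j k) ω * I)) P :=
    .of_bound (Finset.measurable_fun_prod _ fun k _ => by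
      have := hX (j k); fun_prop).aestronglyMeasurable 1 (.of_forall fun ω => by
      simp [norm_prod, norm_exp_ofReal_mul_ofReal_mul_I])
  have integrable_pow : Integrable (fun ω => charFun (κ ω) u ^ N) P :=
    .of_bound ((measurable_charFun_kernel u).pow_const N).aestronglyMeasurable 1
      (.of_forall fun ω => by
        rw [norm_pow]; exact pow_le_one₀ (norm_nonneg _) (norm_charFun_le_one u))
  simp_rw [swapError]
  rw [← integral_sub integrable_prod integrable_pow, ← integral_finsetSum _ fun k _ =>
    integrable_swapWeight_mul_charDeviation hX _ _ _ u]
  simp only [prod_range_sub_pow_eq_sum, swapWeight, Finset.prod_image hj.injOn, charDeviation]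

end FiniteMeasure

variable [IsProbabilityMeasure P]

lemma norm_swapError_le_two (S : Finset ℕ) (i p : ℕ) (u : ℝ) : ‖swapError P X κ S i p u‖ ≤ 2 := by
  refine (norm_integral_le_of_norm_le_const (C := 2) (.of_forall fun ω => ?_)).trans (by simp)
  rw [norm_mul, ← one_mul 2]
  gcongr
  exacts [norm_swapWeight_le S p u ω, norm_charDeviation_le (X i) u ω]

lemma StableTendsto.eventually_norm_swapError_le_of_isCompact (h : StableTendsto P X κ)
    (hX : ∀ n, Measurable (X n)) (S : Finset ℕ) (p : ℕ) {B : Set ℝ} (hB : IsCompact B)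
    {ε : ℝ} (hε : 0 < ε) :
    ∀ᶠ n in atTop, ∀ u ∈ B, ‖swapError P X κ S n p u‖ ≤ ε := by
  have near_B : ∀ᶠ q : ℕ × ℝ in atTop ×ˢ 𝓝ˢ B, ‖swapError P X κ S q.1 p q.2‖ ≤ ε := by
    refine hB.mem_prod_nhdsSet_of_forall fun u₀ _ => ?_
    have h_lim := h.tendsto_integral_mul_charDeviation_prod hX
      (measurable_swapWeight (κ := κ) hX S p)
      (norm_swapWeight_le S p) (continuous_swapWeight S p) u₀
    exact (h_lim.norm.eventually_lt_const (by rwa [norm_zero])).mono fun _ => le_of_lt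
  obtain ⟨large, h_large, near, h_near, h_le⟩ := eventually_prod_iff.1 near_B
  exact h_large.mono fun n hn u hu => h_le hn (h_near.self_of_nhdsSet u hu)

lemma StableTendsto.exists_pos_eventually_norm_swapError_le (h : StableTendsto P X κ)
    (hX : ∀ n, Measurable (X n)) {ε : ℝ} (hε : 0 < ε) :
    ∃ δ > 0, ∀ᶠ n in atTop, ∀ (S : Finset ℕ) (p : ℕ) (u : ℝ), |u| < δ →
      ‖swapError P X κ S n p u‖ ≤ ε := by
  have near_zero := h.tendsto_integral_norm_charDeviation_sub hX 0
  simp only [charDeviation_zero, sub_zero] at near_zero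
  obtain ⟨large, h_large, small, h_small, h_lt⟩ :=
    eventually_prod_iff.1 (near_zero.eventually_lt_const hε)
  obtain ⟨δ, hδ, h_ball⟩ := Metric.eventually_nhds_iff.1 h_small
  exact ⟨δ, hδ, h_large.mono fun n hn S p u hu =>
    (norm_swapError_le hX S n p u).trans (h_lt hn (h_ball (by simpa using hu))).le⟩

lemma StableTendsto.eventually_norm_swapError_le (h : StableTendsto P X κ)
    (hX : ∀ n, Measurable (X n)) (S : Finset ℕ) (T : ℝ) {ε : ℝ} (hε : 0 < ε) :
    ∀ᶠ n in atTop, ∀ (p : ℕ) (u : ℝ), (p + 1) * u ^ 2 ≤ T → ‖swapError P X κ S n p u‖ ≤ ε := by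
  obtain ⟨δ, hδ, h_small⟩ := h.exists_pos_eventually_norm_swapError_le hX hε
  obtain ⟨p₀, hp₀⟩ := exists_nat_gt (T / δ ^ 2)
  have h_finite : ∀ᶠ n in atTop, ∀ p ∈ Finset.range p₀, ∀ u ∈ Set.Icc (-√T) √T,
      ‖swapError P X κ S n p u‖ ≤ ε :=
    (eventually_all_finset _).2 fun p _ =>
      h.eventually_norm_swapError_le_of_isCompact hX S p isCompact_Icc hε
  filter_upwards [h_small, h_finite] with n hn_small hn_finite p u hu
  rcases lt_or_ge |u| δ with hu_small | hu_large
  · exact hn_small S p u hu_small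
  refine hn_finite p (Finset.mem_range.2 ?_) u (abs_le.1 (Real.abs_le_sqrt ?_))
  · have hδu : δ ^ 2 ≤ u ^ 2 := sq_le_sq.2 (by rwa [abs_of_pos hδ])
    have : (p : ℝ) < p₀ := by
      refine lt_of_le_of_lt ((le_div_iff₀ (by positivity)).2 ?_) hp₀
      nlinarith
    exact_mod_cast this
  · nlinarith [sq_nonneg u, p.cast_nonneg (α := ℝ)]

lemma StableTendsto.exists_hasSmallSwapErrors (h : StableTendsto P X κ)
    (hX : ∀ n, Measurable (X n)) : ∃ j : ℕ → ℕ, StrictMono j ∧ HasSmallSwapErrors P X κ j := by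
  have exists_next (F : Finset ℕ) : ∃ y, True ∧ ∀ x ∈ F, x < y ∧ ∀ S ⊆ Finset.range (x + 1),
      ∀ (p : ℕ) (u : ℝ), (p + 1) * u ^ 2 ≤ x → ‖swapError P X κ S y p u‖ ≤ (1 / 2) ^ x := by
    simp only [true_and, ← Finset.mem_powerset]
    refine Eventually.exists (f := atTop) ((eventually_all_finset _).2 fun x _ => ?_)
    exact (eventually_gt_atTop x).and <| (eventually_all_finset _).2 fun S _ =>
      h.eventually_norm_swapError_le hX S x (by positivity)
  obtain ⟨j, -, hj⟩ := exists_seq_of_forall_finset_exists (fun _ => True) _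
    fun F _ => exists_next F
  exact ⟨j, fun a b hab => (hj a b hab).1, fun a b hab => (hj a b hab).2⟩

lemma HasSmallSwapErrors.norm_swapError_le_geometric {j : ℕ → ℕ} (h : HasSmallSwapErrors P X κ j)
    (hj : StrictMono j) {K p : ℕ} {u : ℝ} (hu : (p + 1) * u ^ 2 ≤ K) (k : ℕ) :
    ‖swapError P X κ ((Finset.range k).image j) (j k) p u‖ ≤ 2 * 2 ^ K * (1 / 2) ^ k := by
  rcases le_or_gt k K with hkK | hKk
  · refine (norm_swapError_le_two _ _ p u).trans ?_
    rw [mul_assoc, one_div, inv_pow, ← div_eq_mul_inv]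
    have : (1 : ℝ) ≤ 2 ^ K / 2 ^ k :=
      (one_le_div (by positivity)).2 (pow_le_pow_right₀ one_le_two hkK)
    linarith
  · obtain ⟨a, rfl⟩ := Nat.exists_eq_add_one_of_ne_zero hKk.ne_bot
    have h_image : (Finset.range (a + 1)).image j ⊆ Finset.range (j a + 1) := by
      refine Finset.image_subset_iff.2 fun l hl => Finset.mem_range_succ_iff.2 ?_
      exact hj.monotone (Finset.mem_range_succ_iff.1 hl)
    have hKja : K ≤ j a := (Nat.lt_succ_iff.1 hKk).trans (hj.le_apply)
    calc ‖swapError P X κ ((Finset.range (a + 1)).image j) (j (a + 1)) p u‖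
        ≤ (1 / 2) ^ j a :=
          h a (a + 1) a.lt_succ_self _ h_image p u (hu.trans (by exact_mod_cast hKja))
      _ ≤ (1 / 2) ^ a := pow_le_pow_of_le_one (by norm_num) (by norm_num) hj.le_apply
      _ = 2 * 1 * (1 / 2) ^ (a + 1) := by ring
      _ ≤ 2 * 2 ^ K * (1 / 2) ^ (a + 1) := by
        gcongr
        exact one_le_pow₀ one_le_two

lemma tendsto_inv_sqrt_mul (t : ℝ) :
    Tendsto (fun N : ℕ => (√N)⁻¹ * t) atTop (𝓝 0) := by
  simpa using (tendsto_inv_atTop_zero.comp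
    (Real.tendsto_sqrt_atTop.comp tendsto_natCast_atTop_atTop)).mul_const t

lemma inv_sqrt_mul_sq (N : ℕ) (t : ℝ) : ((√N)⁻¹ * t) ^ 2 = t ^ 2 / N := by
  rw [mul_pow, inv_pow, Real.sq_sqrt N.cast_nonneg, div_eq_inv_mul]

lemma cast_mul_inv_sqrt_mul_sq_le (N : ℕ) (t : ℝ) : N * ((√N)⁻¹ * t) ^ 2 ≤ t ^ 2 := by
  rw [inv_sqrt_mul_sq, ← mul_div_assoc, mul_div_right_comm]
  exact mul_le_of_le_one_left (sq_nonneg t) (div_self_le_one _)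

lemma HasSmallSwapErrors.tendsto_integral_prod_sub {j : ℕ → ℕ}
    (h : HasSmallSwapErrors P X κ j) (hX : ∀ n, Measurable (X n)) (hj : StrictMono j) (t : ℝ) :
    Tendsto (fun N : ℕ =>
      ∫ ω, ∏ k ∈ Finset.range N, exp (((√N)⁻¹ * t : ℝ) * X (j k) ω * I) ∂P
        - ∫ ω, charFun (κ ω) ((√N)⁻¹ * t) ^ N ∂P) atTop (𝓝 0) := by
  let f (N k : ℕ) : ℂ := if k < N then
    swapError P X κ ((Finset.range k).image j) (j k) (N - 1 - k) ((√N)⁻¹ * t) else 0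
  have sum_eq_tsum (N : ℕ) : ∑ k ∈ Finset.range N, swapError P X κ ((Finset.range k).image j) (j k)
      (N - 1 - k) ((√N)⁻¹ * t) = ∑' k, f N k := by
    rw [tsum_eq_sum (s := Finset.range N) fun k hk => if_neg (by simpa using hk)]
    exact Finset.sum_congr rfl fun k hk => (if_pos (Finset.mem_range.1 hk)).symm
  simp_rw [integral_prod_exp_sub_integral_charFun_pow_eq_sum hX hj.injective, sum_eq_tsum]
  obtain ⟨K, hK⟩ := exists_nat_ge (t ^ 2)
  rw [← tsum_zero (α := ℂ) (β := ℕ)]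
  refine tendsto_tsum_of_dominated_convergence (bound := fun k => 2 * 2 ^ K * (1 / 2 : ℝ) ^ k)
    (summable_geometric_two.mul_left _) (fun k => ?_) (.of_forall fun N k => ?_)
  · refine squeeze_zero_norm (fun N => ?_) ((tendsto_integral_norm_charDeviation_nhds_zero (P := P)
      (κ := κ) (hX (j k))).comp (tendsto_inv_sqrt_mul t))
    dsimp only [f]
    split_ifs with hk
    · exact norm_swapError_le hX _ _ _ _
    · rw [norm_zero]
      exact integral_nonneg fun _ => norm_nonneg _
  · dsimp only [f]
    split_ifs with hk
    · refine h.norm_swapError_le_geometric hj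
        (le_trans ?_ ((cast_mul_inv_sqrt_mul_sq_le N t).trans hK)) k
      gcongr
      exact_mod_cast (by omega : N - 1 - k + 1 ≤ N)
    · rw [norm_zero]
      positivity

lemma exp_mul_sum_eq_prod {ι : Type*} (s : Finset ι) (x : ι → ℝ) (t c : ℝ) :
    exp (I * (t * (c * ∑ k ∈ s, x k) : ℝ)) = ∏ k ∈ s, exp ((c * t : ℝ) * x k * I) := by
  rw [← Complex.exp_sum, ← Finset.sum_mul, ← Finset.mul_sum]
  push_cast
  ring_nf

theorem StableTendsto.exists_strictMono_tendsto_integral_exp_sub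
    (h : StableTendsto P X κ) (hX : ∀ n, Measurable (X n)) :
    ∃ j : ℕ → ℕ, StrictMono j ∧ ∀ m : ℕ → ℕ, StrictMono m → ∀ t : ℝ,
      Tendsto (fun N : ℕ =>
        ∫ ω, exp (I * (t * ((√N)⁻¹ * ∑ k ∈ Finset.range N, X (j (m k)) ω) : ℝ)) ∂P
          - ∫ ω, charFun (κ ω) ((√N)⁻¹ * t) ^ N ∂P) atTop (𝓝 0) := by
  obtain ⟨j, hj, h_small⟩ := h.exists_hasSmallSwapErrors hX
  refine ⟨j, hj, fun m hm t => ?_⟩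
  simpa only [exp_mul_sum_eq_prod, Function.comp_apply] using
    (h_small.comp hm).tendsto_integral_prod_sub hX (hj.comp hm) t

lemma isLittleO_charFun_sub_of_integral_eq_zero {ν : Measure ℝ} [IsProbabilityMeasure ν]
    (hν : MemLp id 2 ν) (h_mean : ∫ x, x ∂ν = 0) :
    (fun u => charFun ν u - (1 - (∫ x, x ^ 2 ∂ν : ℝ) * (u ^ 2 : ℝ) / 2)) =o[𝓝 0]
      fun u => u ^ 2 := by
  convert! taylor_isLittleO_univ (x₀ := (0 : ℝ)) (contDiff_charFun (n := 2) hν) using 2 with u u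
  · rw [taylorWithinEval_charFun_zero hν]
    simp only [ofReal_pow, Nat.reduceAdd, mul_pow, sum_range_succ, range_one, sum_singleton,
      Nat.factorial_zero, Nat.cast_one, inv_one, pow_zero, mul_one, integral_const, probReal_univ,
      smul_eq_mul, ofReal_one, Nat.factorial_one, pow_one, one_mul, h_mean, ofReal_zero, mul_zero,
      add_zero, Nat.factorial_two, Nat.cast_ofNat, I_sq, mul_neg, neg_mul, sub_right_inj]
    ring
  · ring

lemma tendsto_charFun_inv_sqrt_mul_pow_of_integral_eq_zero {ν : Measure ℝ} [IsProbabilityMeasure ν]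
    (hν : MemLp id 2 ν) (h_mean : ∫ x, x ∂ν = 0) (t : ℝ) :
    Tendsto (fun N : ℕ => charFun ν ((√N)⁻¹ * t) ^ N) atTop
      (𝓝 (Real.exp (-(∫ x, x ^ 2 ∂ν) * t ^ 2 / 2) : ℝ)) := by
  rw [ofReal_exp]
  refine tendsto_pow_exp_of_isLittleO_sub_add_div _ (.of_const_mul_right (c := (t ^ 2 : ℝ)) ?_)
  rw [← Asymptotics.isLittleO_norm_right]
  convert! ((isLittleO_charFun_sub_of_integral_eq_zero hν h_mean).comp_tendsto
    (tendsto_inv_sqrt_mul t)).norm_right using 2 with N N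
  · rw [Function.comp_apply, inv_sqrt_mul_sq]
    push_cast
    ring
  · rw [Function.comp_apply, inv_sqrt_mul_sq, mul_one_div, ← ofReal_natCast, ← ofReal_div,
      norm_real]

lemma tendsto_integral_charFun_pow_of_integral_eq_zero
    (hκ : ∀ᵐ ω ∂P, MemLp id 2 (κ ω)) (h_mean : ∀ᵐ ω ∂P, ∫ x, x ∂κ ω = 0) (t : ℝ) :
    Tendsto (fun N : ℕ => ∫ ω, charFun (κ ω) ((√N)⁻¹ * t) ^ N ∂P) atTop
      (𝓝 (∫ ω, Real.exp (-(∫ x, x ^ 2 ∂κ ω) * t ^ 2 / 2) ∂P : ℝ)) := by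
  rw [← integral_complex_ofReal]
  refine tendsto_integral_of_dominated_convergence (fun _ => 1)
    (fun N => ((measurable_charFun_kernel _).pow_const N).aestronglyMeasurable)
    (integrable_const _) (fun N => .of_forall fun ω => ?_) ?_
  · rw [norm_pow]
    exact pow_le_one₀ (norm_nonneg _) (norm_charFun_le_one _)
  · filter_upwards [hκ, h_mean] with ω hω hω_mean
    exact tendsto_charFun_inv_sqrt_mul_pow_of_integral_eq_zero hω hω_mean t

lemma integral_shiftKernel_integral {ω : Ω}
    (hω : Integrable id (κ ω)) (hm : Measurable fun ω => ∫ x, x ∂κ ω) :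
    ∫ x, x ∂shiftKernel κ (fun ω => ∫ x, x ∂κ ω) ω = 0 := by
  rw [shiftKernel_apply hm, integral_map (by fun_prop) (by fun_prop),
    integral_sub (f := fun x => x) hω (integrable_const _)]
  simp

theorem StableTendsto.exists_subsequence_clt (h : StableTendsto P X κ)
    (hX : ∀ n, Measurable (X n)) (hκ : ∀ᵐ ω ∂P, MemLp id 2 (κ ω)) :
    ∃ n : ℕ → ℕ, StrictMono n ∧
      ∃ X₀ Y : Ω → ℝ, Measurable X₀ ∧ Measurable Y ∧ (∀ ω, 0 ≤ Y ω) ∧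
        ∀ m : ℕ → ℕ, StrictMono m → ∀ t : ℝ,
          Tendsto (fun N : ℕ => ∫ ω, exp (I *
            (t * ((√N)⁻¹ * ∑ k ∈ Finset.range N, (X (n (m k)) ω - X₀ ω)) : ℝ)) ∂P) atTop
            (𝓝 (∫ ω, Real.exp (-Y ω * t ^ 2 / 2) ∂P : ℝ)) := by
  let X₀ (ω : Ω) : ℝ := ∫ x, x ∂κ ω
  have hX₀ : Measurable X₀ := (stronglyMeasurable_id.integral_kernel (κ := κ)).measurable
  have := isMarkovKernel_shiftKernel (κ := κ) hX₀
  have hY : Measurable fun ω => ∫ x, x ^ 2 ∂shiftKernel κ X₀ ω :=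
    ((measurable_id.pow_const 2).stronglyMeasurable.integral_kernel).measurable
  obtain ⟨n, hn, h_sub⟩ :=
    (h.sub hX₀).exists_strictMono_tendsto_integral_exp_sub fun n => (hX n).sub hX₀
  refine ⟨n, hn, X₀, _, hX₀, hY, fun ω => integral_nonneg fun x => sq_nonneg x, fun m hm t => ?_⟩
  have h_iid := tendsto_integral_charFun_pow_of_integral_eq_zero (P := P)
    (hκ.mono fun ω => (memLp_id_shiftKernel_iff hX₀).2)
    (hκ.mono fun ω hω => integral_shiftKernel_integral (hω.integrable one_le_two) hX₀) t
  simpa only [sub_add_cancel, zero_add] using (h_sub m hm t).add h_iid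

lemma memLp_id_two_of_conv {ν ν' : Measure ℝ} [IsFiniteMeasure ν] [SFinite ν'] [NeZero ν']
    (h : MemLp id 2 (ν ∗ ν')) : MemLp id 2 ν := by
  rw [Measure.conv, memLp_map_measure_iff (by fun_prop) (by fun_prop),
    memLp_two_iff_integrable_sq (by fun_prop)] at h
  obtain ⟨y, hy⟩ := h.prod_left_ae.exists
  convert! ((memLp_two_iff_integrable_sq (by fun_prop)).2 hy).sub (memLp_const y) using 1
  ext x
  simp

lemma re_charFun {σ : Measure ℝ} [IsFiniteMeasure σ] (u : ℝ) :
    (charFun σ u).re = ∫ x, Real.cos (u * x) ∂σ := by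
  have h_int : Integrable (fun x : ℝ => exp (u * x * I)) σ :=
    .of_bound (by fun_prop) 1 (.of_forall fun x => (norm_exp_ofReal_mul_ofReal_mul_I u x).le)
  rw [charFun_apply_real, ← RCLike.re_eq_complex_re, ← integral_re h_int]
  simp_rw [RCLike.re_eq_complex_re, ← ofReal_mul, exp_ofReal_mul_I_re]

lemma charFun_conv_map_neg (ν : Measure ℝ) [IsFiniteMeasure ν] (u : ℝ) :
    charFun (ν ∗ ν.map (-1 * ·)) u = (‖charFun ν u‖ ^ 2 : ℝ) := by
  rw [charFun_conv, charFun_map_mul, neg_one_mul, charFun_neg, mul_conj']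
  push_cast
  rfl

lemma integral_one_sub_cos_conv_map_neg (ν : Measure ℝ) [IsProbabilityMeasure ν] (u : ℝ) :
    ∫ x, (1 - Real.cos (u * x)) ∂(ν ∗ ν.map (-1 * ·)) = 1 - ‖charFun ν u‖ ^ 2 := by
  have : IsProbabilityMeasure (ν.map (-1 * ·)) := Measure.isProbabilityMeasure_map (by fun_prop)
  have h_int : Integrable (fun x => Real.cos (u * x)) (ν ∗ ν.map (-1 * ·)) :=
    .of_bound (by fun_prop) 1 (.of_forall fun x => Real.abs_cos_le_one _)
  rw [integral_sub (integrable_const _) h_int, ← re_charFun, charFun_conv_map_neg, ofReal_re,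
    integral_const, probReal_univ, one_smul]

lemma eventually_le_cast_mul_one_sub_cos (y : ℝ) :
    ∀ᶠ N : ℕ in atTop, 2 / Real.pi ^ 2 * y ^ 2 ≤ N * (1 - Real.cos ((√N)⁻¹ * y)) := by
  have abs_tendsto : Tendsto (fun N : ℕ => |(√N)⁻¹ * y|) atTop (𝓝 0) := by
    simpa using (tendsto_inv_sqrt_mul y).abs
  filter_upwards [abs_tendsto.eventually_le_const Real.pi_pos, eventually_gt_atTop 0] with N hN hN₀
  calc 2 / Real.pi ^ 2 * y ^ 2 = N * (2 / Real.pi ^ 2 * ((√N)⁻¹ * y) ^ 2) := by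
        rw [inv_sqrt_mul_sq]
        field_simp
    _ ≤ N * (1 - Real.cos ((√N)⁻¹ * y)) := by
        gcongr
        linarith [Real.cos_le_one_sub_mul_cos_sq hN]

lemma ofReal_mul_integral_one_sub_cos {σ : Measure ℝ} [IsFiniteMeasure σ] {c : ℝ} (hc : 0 ≤ c)
    (u : ℝ) : ENNReal.ofReal (c * ∫ x, (1 - Real.cos (u * x)) ∂σ)
      = ∫⁻ x, ENNReal.ofReal (c * (1 - Real.cos (u * x))) ∂σ := by
  have h_nonneg (x : ℝ) : 0 ≤ c * (1 - Real.cos (u * x)) :=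
    mul_nonneg hc (sub_nonneg.2 (Real.cos_le_one _))
  rw [← integral_const_mul, ofReal_integral_eq_lintegral_ofReal _ (.of_forall h_nonneg)]
  refine .of_bound (by fun_prop) (c * 2) (.of_forall fun x => ?_)
  rw [Real.norm_of_nonneg (h_nonneg x)]
  gcongr
  linarith [Real.neg_one_le_cos (u * x)]

lemma tendsto_cast_mul_integral_one_sub_cos_atTop {σ : Measure ℝ} [IsFiniteMeasure σ]
    (hσ : ¬ MemLp id 2 σ) {t : ℝ} (ht : t ≠ 0) :
    Tendsto (fun N : ℕ => N * ∫ x, (1 - Real.cos ((√N)⁻¹ * t * x)) ∂σ) atTop atTop := by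
  have lintegral_liminf_eq_top : ∫⁻ x, liminf (fun N : ℕ =>
      ENNReal.ofReal (N * (1 - Real.cos ((√N)⁻¹ * t * x)))) atTop ∂σ = ⊤ := by
    have lintegral_sq : ∫⁻ x, ENNReal.ofReal (2 / Real.pi ^ 2 * (t * x) ^ 2) ∂σ = ⊤ := by
      simp_rw [mul_pow, ← mul_assoc]
      simp_rw [ENNReal.ofReal_mul (show 0 ≤ 2 / Real.pi ^ 2 * t ^ 2 by positivity)]
      rw [lintegral_const_mul _ (by fun_prop),
        not_lt_top_iff.1 (mt memLp_id_two_iff_lintegral_lt_top.2 hσ), ENNReal.mul_top]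
      exact (ENNReal.ofReal_pos.2 (by positivity)).ne'
    refine eq_top_mono (lintegral_mono fun x => ?_) lintegral_sq
    refine le_liminf_of_le (by isBoundedDefault) ?_
    filter_upwards [eventually_le_cast_mul_one_sub_cos (t * x)] with N hN
    rw [← mul_assoc] at hN
    exact ENNReal.ofReal_le_ofReal hN
  rw [← ENNReal.tendsto_ofReal_nhds_top]
  simp_rw [ofReal_mul_integral_one_sub_cos (Nat.cast_nonneg _)]
  exact tendsto_of_le_liminf_of_limsup_le
    (lintegral_liminf_eq_top.ge.trans (lintegral_liminf_le fun N => by fun_prop)) le_top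

lemma tendsto_pow_zero_of_tendsto_cast_mul_one_sub {a : ℕ → ℝ} (ha : ∀ N, 0 ≤ a N)
    (h : Tendsto (fun N : ℕ => N * (1 - a N)) atTop atTop) :
    Tendsto (fun N => a N ^ N) atTop (𝓝 0) := by
  refine squeeze_zero (fun N => pow_nonneg (ha N) N) (fun N => ?_)
    (Real.tendsto_exp_neg_atTop_nhds_zero.comp h)
  calc a N ^ N ≤ Real.exp (-(1 - a N)) ^ N := by
        gcongr
        · exact ha N
        · linarith [Real.add_one_le_exp (-(1 - a N))]
    _ = Real.exp (-(N * (1 - a N))) := by rw [← Real.exp_nat_mul, mul_neg]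

lemma tendsto_charFun_inv_sqrt_mul_pow_zero {ν : Measure ℝ} [IsProbabilityMeasure ν]
    (hν : ¬ MemLp id 2 ν) {t : ℝ} (ht : t ≠ 0) :
    Tendsto (fun N : ℕ => charFun ν ((√N)⁻¹ * t) ^ N) atTop (𝓝 0) := by
  have : IsProbabilityMeasure (ν.map (-1 * ·)) := Measure.isProbabilityMeasure_map (by fun_prop)
  have h_conv : ¬ MemLp id 2 (ν ∗ ν.map (-1 * ·)) := mt memLp_id_two_of_conv hν
  have h_atTop := tendsto_cast_mul_integral_one_sub_cos_atTop h_conv ht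
  simp_rw [integral_one_sub_cos_conv_map_neg] at h_atTop
  rw [tendsto_zero_iff_norm_tendsto_zero]
  simp_rw [norm_pow]
  refine tendsto_pow_zero_of_tendsto_cast_mul_one_sub (fun _ => norm_nonneg _)
    (tendsto_atTop_mono (fun N => ?_) (h_atTop.atTop_div_const two_pos))
  rw [mul_div_assoc]
  gcongr
  nlinarith [sq_nonneg (1 - ‖charFun ν ((√N)⁻¹ * t)‖)]

lemma norm_le_measureReal_of_tendsto_integral_charFun_pow {t : ℝ} (ht : t ≠ 0) {L : ℂ}
    (h : Tendsto (fun N : ℕ => ∫ ω, charFun (κ ω) ((√N)⁻¹ * t) ^ N ∂P) atTop (𝓝 L)) :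
    ‖L‖ ≤ P.real {ω | MemLp id 2 (κ ω)} := by
  set G := {ω | MemLp id 2 (κ ω)}
  have hG : MeasurableSet G := measurableSet_memLp_id_two
  have h_meas (N : ℕ) : Measurable fun ω => charFun (κ ω) ((√N)⁻¹ * t) ^ N :=
    (measurable_charFun_kernel _).pow_const N
  have h_norm (N : ℕ) (ω : Ω) : ‖charFun (κ ω) ((√N)⁻¹ * t) ^ N‖ ≤ 1 := by
    rw [norm_pow]
    exact pow_le_one₀ (norm_nonneg _) (norm_charFun_le_one _)
  have compl_tendsto : Tendsto (fun N : ℕ => ∫ ω in Gᶜ, charFun (κ ω) ((√N)⁻¹ * t) ^ N ∂P) atTop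
      (𝓝 0) := by
    rw [← integral_zero Ω ℂ (μ := P.restrict Gᶜ)]
    refine tendsto_integral_of_dominated_convergence (fun _ => 1)
      (fun N => (h_meas N).aestronglyMeasurable) (integrable_const _)
      (fun N => .of_forall (h_norm N)) ?_
    filter_upwards [ae_restrict_mem hG.compl] with ω hω
    exact tendsto_charFun_inv_sqrt_mul_pow_zero hω ht
  have set_tendsto : Tendsto (fun N : ℕ => ∫ ω in G, charFun (κ ω) ((√N)⁻¹ * t) ^ N ∂P) atTop
      (𝓝 L) := by
    rw [← sub_zero L]
    refine (h.sub compl_tendsto).congr fun N => ?_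
    rw [sub_eq_iff_eq_add, integral_add_compl hG
      (.of_bound (h_meas N).aestronglyMeasurable 1 (.of_forall (h_norm N)))]
  refine le_of_tendsto' set_tendsto.norm fun N => ?_
  simpa using norm_setIntegral_le_of_norm_le_const (measure_lt_top P G) fun ω _ => h_norm N ω

lemma tendsto_integral_exp_neg_mul_sq_nhds_zero {Y : Ω → ℝ} (hYm : Measurable Y)
    (hY : ∀ᵐ ω ∂P, 0 ≤ Y ω) :
    Tendsto (fun t : ℝ => ∫ ω, Real.exp (-Y ω * t ^ 2 / 2) ∂P) (𝓝 0) (𝓝 1) := by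
  rw [show (1 : ℝ) = ∫ _, 1 ∂P by simp]
  refine tendsto_integral_filter_of_dominated_convergence (fun _ => 1)
    (.of_forall fun t => by fun_prop) (.of_forall fun t => ?_) (integrable_const _)
    (.of_forall fun ω => ?_)
  · filter_upwards [hY] with ω hω
    rw [Real.norm_of_nonneg (Real.exp_pos _).le, Real.exp_le_one_iff]
    linarith [mul_nonneg hω (sq_nonneg t)]
  · have h_cont : Continuous fun t : ℝ => Real.exp (-Y ω * t ^ 2 / 2) := by fun_prop
    simpa using h_cont.tendsto 0

lemma ae_memLp_of_tendsto_integral_charFun_pow {Y : Ω → ℝ} (hYm : Measurable Y)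
    (hY : ∀ᵐ ω ∂P, 0 ≤ Y ω)
    (h : ∀ t : ℝ, Tendsto (fun N : ℕ => ∫ ω, charFun (κ ω) ((√N)⁻¹ * t) ^ N ∂P) atTop
      (𝓝 (∫ ω, Real.exp (-Y ω * t ^ 2 / 2) ∂P : ℝ))) :
    ∀ᵐ ω ∂P, MemLp id 2 (κ ω) := by
  have integral_le {t : ℝ} (ht : t ≠ 0) :
      ∫ ω, Real.exp (-Y ω * t ^ 2 / 2) ∂P ≤ P.real {ω | MemLp id 2 (κ ω)} :=
    (Real.le_norm_self _).trans ((norm_real _).symm.trans_le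
      (norm_le_measureReal_of_tendsto_integral_charFun_pow ht (h t)))
  have one_le : 1 ≤ P.real {ω | MemLp id 2 (κ ω)} :=
    le_of_tendsto (x := 𝓝[≠] 0) ((tendsto_integral_exp_neg_mul_sq_nhds_zero hYm hY).mono_left
      nhdsWithin_le_nhds) (eventually_mem_nhdsWithin.mono fun t ht => integral_le ht)
  refine (mem_ae_iff_prob_eq_one measurableSet_memLp_id_two).2 (le_antisymm prob_le_one ?_)
  simpa only [ENNReal.ofReal_one] using ENNReal.ofReal_le_of_le_toReal one_le

theorem StableTendsto.ae_memLp_of_clt (h : StableTendsto P X κ) (hX : ∀ n, Measurable (X n))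
    {X₀ Y : Ω → ℝ} (hX₀ : Measurable X₀) (hYm : Measurable Y) (hY : ∀ᵐ ω ∂P, 0 ≤ Y ω)
    (h_clt : ∀ m : ℕ → ℕ, StrictMono m → ∀ t : ℝ,
      Tendsto (fun N : ℕ => ∫ ω, exp (I *
        (t * ((√N)⁻¹ * ∑ k ∈ Finset.range N, (X (m k) ω - X₀ ω)) : ℝ)) ∂P) atTop
        (𝓝 (∫ ω, Real.exp (-Y ω * t ^ 2 / 2) ∂P : ℝ))) :
    ∀ᵐ ω ∂P, MemLp id 2 (κ ω) := by
  have := isMarkovKernel_shiftKernel (κ := κ) hX₀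
  obtain ⟨m, hm, h_sub⟩ :=
    (h.sub hX₀).exists_strictMono_tendsto_integral_exp_sub fun n => (hX n).sub hX₀
  suffices ∀ᵐ ω ∂P, MemLp id 2 (shiftKernel κ X₀ ω) from
    this.mono fun ω => (memLp_id_shiftKernel_iff hX₀).1
  refine ae_memLp_of_tendsto_integral_charFun_pow hYm hY fun t => ?_
  simpa only [sub_sub_cancel, sub_zero, id] using
    (h_clt m hm t).sub (h_sub id strictMono_id t)

end StableConvergence

end SubsequenceCLT

/-- **Theorem 1.** Let `(X_n)` be a determining sequence with limit random measure `μ`. There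
exists a subsequence `(X_{n_k})` and random variables `X₀` and `Y ≥ 0` such that the
subsequence, together with all of its further subsequences, satisfies the randomized CLT
`N^{-1/2} ∑_{k≤N} (X_{n_k} - X₀) → N(0, Y)` in distribution (equivalently, the characteristic
functions converge to `E exp(-Y t²/2)` for every `t`) if and only if
`∫ x² dμ(x) < ∞` almost surely. -/
theorem statement1
    {Ω : Type*} [MeasurableSpace Ω] (P : Measure Ω) [IsProbabilityMeasure P]
    (X : ℕ → Ω → ℝ) (hXmeas : ∀ n, Measurable (X n)) (μ : Ω → Measure ℝ)
    (hdet : Determining P X) (hlrm : IsLimitRandomMeasure P X μ) :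
    (∃ n : ℕ → ℕ, StrictMono n ∧
      ∃ X₀ Y : Ω → ℝ, Measurable X₀ ∧ Measurable Y ∧ (∀ᵐ ω ∂P, 0 ≤ Y ω) ∧
        ∀ m : ℕ → ℕ, StrictMono m → ∀ t : ℝ,
          Tendsto
            (fun N : ℕ => ∫ ω, Complex.exp (Complex.I *
              ((t * ((Real.sqrt (N : ℝ))⁻¹ * ∑ k ∈ Finset.range N, (X (n (m k)) ω - X₀ ω)) : ℝ))) ∂P)
            atTop (𝓝 ((∫ ω, Real.exp (-(Y ω) * t ^ 2 / 2) ∂P : ℝ) : ℂ)))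
    ↔ (∀ᵐ ω ∂P, ∫⁻ x, ENNReal.ofReal (x ^ 2) ∂(μ ω) < ⊤) := by
  have ⟨hprob, hmeas, _⟩ := hlrm
  let κ : ProbabilityTheory.Kernel Ω ℝ := ⟨μ, Measure.measurable_of_measurable_coe _ hmeas⟩
  have : ProbabilityTheory.IsMarkovKernel κ := ⟨hprob⟩
  have h_stable : SubsequenceCLT.StableTendsto P X κ :=
    SubsequenceCLT.stableTendsto_of_isLimitRandomMeasure hXmeas hlrm
  change _ ↔ ∀ᵐ ω ∂P, ∫⁻ x, ENNReal.ofReal (x ^ 2) ∂(κ ω) < ⊤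
  simp_rw [← SubsequenceCLT.memLp_id_two_iff_lintegral_lt_top]
  constructor
  · rintro ⟨n, hn, X₀, Y, hX₀, hYm, hY, h_clt⟩
    exact (h_stable.comp hn.tendsto_atTop).ae_memLp_of_clt (fun k => hXmeas (n k)) hX₀ hYm hY h_clt
  · intro h_fin
    obtain ⟨n, hn, X₀, Y, hX₀, hYm, hY, h_clt⟩ := h_stable.exists_subsequence_clt hXmeas h_fin
    exact ⟨n, hn, X₀, Y, hX₀, hYm, .of_forall hY, h_clt⟩
end

section
/- Let 0 < α < 2, c > 0, and let μ, μ₁, μ₂, … ∈ S(α, c) with characteristic functions φ, φ₁, φ₂, … and associated functions β, β₁, β₂, …. If ρ(μ_n, μ) → 0 as n → ∞, then β_n(t) → β(t) and φ_n(t) → φ(t) uniformly on compact intervals, and consequently μ_n converges to μ in distribution (weakly). -/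
open MeasureTheory Filter Finset
open scoped Topology BoundedContinuousFunction ENNReal

/-! The dyadic shell containing `t` enters `ρ` with weight `2^{-k}`, so `|β₁(t) - β₂(t)| ≤ 2^K ρ`
whenever `|t| ≤ 2^K`: convergence in `ρ` forces uniform convergence on bounded sets. Since
`φ₁(t) - φ₂(t) = |t|^α (β₁(t) - β₂(t))`, the characteristic functions inherit it, and Lévy's
convergence theorem gives the weak convergence of the measures. -/

section SupDistOn

variable {X E : Type*} [PseudoMetricSpace E] {f g : X → E}

/-- The uniform distance of `f` and `g` on `s`, from which `rho` is assembled. As a real supremum it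
takes the junk value `0` when `dist (f x) (g x)` is unbounded on `s`. -/
noncomputable def supDistOn (s : Set X) (f g : X → E) : ℝ :=
  ⨆ x : s, dist (f x) (g x)

theorem supDistOn_nonneg (s : Set X) (f g : X → E) : 0 ≤ supDistOn s f g :=
  Real.iSup_nonneg fun _ => dist_nonneg

theorem supDistOn_le {s : Set X} {M : ℝ} (hM : 0 ≤ M) (h : ∀ x ∈ s, dist (f x) (g x) ≤ M) :
    supDistOn s f g ≤ M :=
  Real.iSup_le (fun x => h x x.2) hM

theorem dist_le_supDistOn {s : Set X} {x : X}
    (hfg : BddAbove ((fun x => dist (f x) (g x)) '' s)) (hx : x ∈ s) :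
    dist (f x) (g x) ≤ supDistOn s f g :=
  le_ciSup_set hfg hx

theorem summable_mul_supDistOn {w : ℕ → ℝ} (hw : Summable w) (hw₀ : ∀ k, 0 ≤ w k)
    (hfg : BddAbove (Set.range fun x => dist (f x) (g x))) (s : ℕ → Set X) :
    Summable fun k => w k * supDistOn (s k) f g := by
  obtain ⟨M, hM⟩ := hfg
  refine Summable.of_nonneg_of_le (fun k => mul_nonneg (hw₀ k) (supDistOn_nonneg _ f g))
    (fun k => mul_le_mul_of_nonneg_left ?_ (hw₀ k)) (hw.mul_right (max M 0))
  exact supDistOn_le (le_max_right M 0) fun x _ =>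
    (hM (Set.mem_range_self x)).trans (le_max_left M 0)

end SupDistOn

section Rho

variable {β₁ β₂ : ℝ → ℝ}

/-- The `k`-th dyadic shell `2^k ≤ |t| ≤ 2^(k+1)`, on which `rho` measures the uniform distance with
weight `2^(-k)`. -/
def dyadicShell (k : ℕ) : Set ℝ :=
  {t | 2 ^ k ≤ |t| ∧ |t| ≤ 2 ^ (k + 1)}

theorem rho_eq_supDistOn_add_tsum (β₁ β₂ : ℝ → ℝ) :
    rho β₁ β₂ = supDistOn {t | |t| ≤ 1} β₁ β₂ +
      ∑' k : ℕ, (2 ^ k : ℝ)⁻¹ * supDistOn (dyadicShell k) β₁ β₂ :=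
  rfl

theorem inv_two_pow_mul_supDistOn_nonneg (β₁ β₂ : ℝ → ℝ) (k : ℕ) :
    0 ≤ (2 ^ k : ℝ)⁻¹ * supDistOn (dyadicShell k) β₁ β₂ :=
  mul_nonneg (by positivity) (supDistOn_nonneg _ _ _)

theorem rho_nonneg (β₁ β₂ : ℝ → ℝ) : 0 ≤ rho β₁ β₂ := by
  rw [rho_eq_supDistOn_add_tsum]
  exact add_nonneg (supDistOn_nonneg _ _ _)
    (tsum_nonneg (inv_two_pow_mul_supDistOn_nonneg β₁ β₂))

theorem supDistOn_abs_le_one_le_rho (β₁ β₂ : ℝ → ℝ) :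
    supDistOn {t | |t| ≤ 1} β₁ β₂ ≤ rho β₁ β₂ := by
  rw [rho_eq_supDistOn_add_tsum]
  exact le_add_of_nonneg_right (tsum_nonneg (inv_two_pow_mul_supDistOn_nonneg β₁ β₂))

theorem supDistOn_dyadicShell_le_two_pow_mul_rho
    (hβ : BddAbove (Set.range fun t => dist (β₁ t) (β₂ t))) (k : ℕ) :
    supDistOn (dyadicShell k) β₁ β₂ ≤ 2 ^ k * rho β₁ β₂ := by
  have hweights : Summable fun k : ℕ => (2 ^ k : ℝ)⁻¹ := by
    simpa only [one_div, inv_pow] using summable_geometric_two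
  have hsummable : Summable fun k : ℕ => (2 ^ k : ℝ)⁻¹ * supDistOn (dyadicShell k) β₁ β₂ :=
    summable_mul_supDistOn hweights (fun k => by positivity) hβ dyadicShell
  rw [← inv_mul_le_iff₀ (by positivity), rho_eq_supDistOn_add_tsum]
  exact (hsummable.le_tsum k fun j _ => inv_two_pow_mul_supDistOn_nonneg β₁ β₂ j).trans
    (le_add_of_nonneg_left (supDistOn_nonneg _ _ _))

theorem dist_le_two_pow_mul_rho (hβ : BddAbove (Set.range fun t => dist (β₁ t) (β₂ t)))
    {K : ℕ} {t : ℝ} (ht : |t| ≤ 2 ^ K) : dist (β₁ t) (β₂ t) ≤ 2 ^ K * rho β₁ β₂ := by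
  have hβ_on (s : Set ℝ) : BddAbove ((fun t => dist (β₁ t) (β₂ t)) '' s) :=
    hβ.mono (Set.image_subset_range _ s)
  rcases le_total |t| 1 with ht_one | ht_one
  · calc dist (β₁ t) (β₂ t)
        ≤ supDistOn {t | |t| ≤ 1} β₁ β₂ := dist_le_supDistOn (hβ_on _) ht_one
      _ ≤ rho β₁ β₂ := supDistOn_abs_le_one_le_rho β₁ β₂
      _ ≤ 2 ^ K * rho β₁ β₂ :=
          le_mul_of_one_le_left (rho_nonneg β₁ β₂) (one_le_pow₀ one_le_two)
  · obtain ⟨k, hkt, htk⟩ := exists_nat_pow_near ht_one one_lt_two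
    calc dist (β₁ t) (β₂ t)
        ≤ supDistOn (dyadicShell k) β₁ β₂ := dist_le_supDistOn (hβ_on _) ⟨hkt, htk.le⟩
      _ ≤ 2 ^ k * rho β₁ β₂ := supDistOn_dyadicShell_le_two_pow_mul_rho hβ k
      _ ≤ 2 ^ K * rho β₁ β₂ := mul_le_mul_of_nonneg_right (hkt.trans ht) (rho_nonneg β₁ β₂)

theorem tendstoUniformlyOn_of_tendsto_rho {ι : Type*} {l : Filter ι} {β : ℝ → ℝ} {βn : ι → ℝ → ℝ}
    (hβ : ∀ n, BddAbove (Set.range fun t => dist (βn n t) (β t)))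
    (hρ : Tendsto (fun n => rho (βn n) β) l (𝓝 0)) {s : Set ℝ} (hs : Bornology.IsBounded s) :
    TendstoUniformlyOn βn β l s := by
  obtain ⟨R, hR⟩ := hs.exists_norm_le
  obtain ⟨K, hK⟩ := pow_unbounded_of_one_lt R one_lt_two
  have hbound : Tendsto (fun n => 2 ^ K * rho (βn n) β) l (𝓝 0) := by
    simpa only [mul_zero] using hρ.const_mul (2 ^ K)
  rw [Metric.tendstoUniformlyOn_iff]
  intro ε hε
  filter_upwards [hbound.eventually_lt_const hε] with n hn t ht
  rw [dist_comm]
  exact (dist_le_two_pow_mul_rho (hβ n) ((hR t ht).trans hK.le)).trans_lt hn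

end Rho

theorem charFn_eq_charFun (μ : Measure ℝ) (t : ℝ) : charFn μ t = charFun μ t := by
  rw [charFun_apply_real, charFn]
  congr with x
  ring_nf

theorem tendsto_integral_of_tendsto_charFn {μ : Measure ℝ} {μn : ℕ → Measure ℝ}
    [hμ : IsProbabilityMeasure μ] [hμn : ∀ n, IsProbabilityMeasure (μn n)]
    (h : ∀ t, Tendsto (fun n => charFn (μn n) t) atTop (𝓝 (charFn μ t))) (f : ℝ →ᵇ ℝ) :
    Tendsto (fun n => ∫ x, f x ∂(μn n)) atTop (𝓝 (∫ x, f x ∂μ)) := by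
  simp only [charFn_eq_charFun] at h
  let P : ProbabilityMeasure ℝ := ⟨μ, hμ⟩
  let Pn (n : ℕ) : ProbabilityMeasure ℝ := ⟨μn n, hμn n⟩
  have hP : Tendsto Pn atTop (𝓝 P) := ProbabilityMeasure.tendsto_of_tendsto_charFun h
  exact ProbabilityMeasure.tendsto_iff_forall_integral_tendsto.1 hP f

namespace IsAssocFn

variable {α c : ℝ} {μ ν : Measure ℝ} {β β₁ β₂ : ℝ → ℝ}

theorem isProbabilityMeasure (hα : α ≠ 0) (hβ : IsAssocFn α c μ β) : IsProbabilityMeasure μ := by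
  have hφ_zero : charFn μ 0 = 1 := by simpa [Real.zero_rpow hα] using hβ.eq 0
  rw [charFn_eq_charFun, charFun_zero] at hφ_zero
  exact isProbabilityMeasure_iff_real.2 (by exact_mod_cast hφ_zero)

theorem bddAbove_range_dist (h₁ : IsAssocFn α c μ β₁) (h₂ : IsAssocFn α c ν β₂) :
    BddAbove (Set.range fun t => dist (β₁ t) (β₂ t)) := by
  obtain ⟨M₁, hM₁⟩ := h₁.bounded
  obtain ⟨M₂, hM₂⟩ := h₂.bounded
  refine ⟨M₁ + M₂, Set.forall_mem_range.2 fun t => ?_⟩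
  exact (dist_le_norm_add_norm _ _).trans (add_le_add (hM₁ t) (hM₂ t))

theorem dist_charFn (h₁ : IsAssocFn α c μ β₁) (h₂ : IsAssocFn α c ν β₂) (t : ℝ) :
    dist (charFn μ t) (charFn ν t) = |t| ^ α * dist (β₁ t) (β₂ t) := by
  rw [h₁.eq, h₂.eq, Complex.isometry_ofReal.dist_eq, dist_add_left]
  simp only [Real.dist_eq]
  rw [← sub_mul, abs_mul, abs_of_nonneg (Real.rpow_nonneg (abs_nonneg t) α), mul_comm]

theorem tendstoUniformlyOn_charFn {ι : Type*} {l : Filter ι} {μn : ι → Measure ℝ}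
    {βn : ι → ℝ → ℝ} (hα : 0 ≤ α) (hβ : IsAssocFn α c μ β)
    (hβn : ∀ n, IsAssocFn α c (μn n) (βn n)) {s : Set ℝ} (hs : Bornology.IsBounded s)
    (h : TendstoUniformlyOn βn β l s) :
    TendstoUniformlyOn (fun n t => charFn (μn n) t) (charFn μ) l s := by
  obtain ⟨R, hR_pos, hR⟩ := hs.exists_pos_norm_le
  have hRα_pos : 0 < R ^ α := Real.rpow_pos_of_pos hR_pos α
  rw [Metric.tendstoUniformlyOn_iff] at h ⊢
  intro ε hε
  filter_upwards [h (ε / R ^ α) (div_pos hε hRα_pos)] with n hn t ht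
  calc dist (charFn μ t) (charFn (μn n) t)
      = |t| ^ α * dist (β t) (βn n t) := hβ.dist_charFn (hβn n) t
    _ ≤ R ^ α * dist (β t) (βn n t) :=
        mul_le_mul_of_nonneg_right (Real.rpow_le_rpow (abs_nonneg t) (hR t ht) hα) dist_nonneg
    _ < ε := (lt_div_iff₀' hRα_pos).1 (hn t ht)

end IsAssocFn

theorem statement6_general
    {α c : ℝ} (hα : 0 < α) {μ : Measure ℝ} {μn : ℕ → Measure ℝ} {β : ℝ → ℝ} {βn : ℕ → ℝ → ℝ}
    (hβ : IsAssocFn α c μ β) (hβn : ∀ n, IsAssocFn α c (μn n) (βn n))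
    (hρ : Tendsto (fun n => rho (βn n) β) atTop (𝓝 0)) :
    (∀ a b : ℝ, TendstoUniformlyOn (fun n => βn n) β atTop (Set.Icc a b)) ∧
    (∀ a b : ℝ, TendstoUniformlyOn (fun n t => charFn (μn n) t) (charFn μ) atTop
      (Set.Icc a b)) ∧
    (∀ f : ℝ →ᵇ ℝ, Tendsto (fun n => ∫ x, f x ∂(μn n)) atTop (𝓝 (∫ x, f x ∂μ))) := by
  have hβ_unif (a b : ℝ) : TendstoUniformlyOn βn β atTop (Set.Icc a b) :=
    tendstoUniformlyOn_of_tendsto_rho (fun n => (hβn n).bddAbove_range_dist hβ) hρ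
      (Metric.isBounded_Icc a b)
  have hφ_unif (a b : ℝ) :
      TendstoUniformlyOn (fun n t => charFn (μn n) t) (charFn μ) atTop (Set.Icc a b) :=
    hβ.tendstoUniformlyOn_charFn hα.le hβn (Metric.isBounded_Icc a b) (hβ_unif a b)
  have hμ : IsProbabilityMeasure μ := hβ.isProbabilityMeasure hα.ne'
  have hμn (n : ℕ) : IsProbabilityMeasure (μn n) := (hβn n).isProbabilityMeasure hα.ne'
  exact ⟨hβ_unif, hφ_unif, tendsto_integral_of_tendsto_charFn fun t =>
    (hφ_unif t t).tendsto_at ⟨le_rfl, le_rfl⟩⟩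

/-- If `μ, μ₁, μ₂, … ∈ S(α, c)` and `ρ(μ_n, μ) → 0`, then `β_n → β` and `φ_n → φ` uniformly
on compact intervals, and consequently `μ_n → μ` in distribution. -/
theorem statement6
    (α c : ℝ) (hα : 0 < α) (hα2 : α < 2) (hc : 0 < c)
    (μ : Measure ℝ) (μn : ℕ → Measure ℝ) (β : ℝ → ℝ) (βn : ℕ → ℝ → ℝ)
    (hμ : MemS α c μ) (hμn : ∀ n, MemS α c (μn n))
    (hβ : IsAssocFn α c μ β) (hβn : ∀ n, IsAssocFn α c (μn n) (βn n))
    (hρ : Tendsto (fun n => rho (βn n) β) atTop (𝓝 0)) :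
    (∀ a b : ℝ, TendstoUniformlyOn (fun n => βn n) β atTop (Set.Icc a b)) ∧
    (∀ a b : ℝ, TendstoUniformlyOn (fun n t => charFn (μn n) t) (charFn μ) atTop
      (Set.Icc a b)) ∧
    (∀ f : ℝ →ᵇ ℝ, Tendsto (fun n => ∫ x, f x ∂(μn n)) atTop (𝓝 (∫ x, f x ∂μ))) :=
  statement6_general hα hβ hβn hρ
end

section
/- Every tight sequence (X_n) of random variables on a probability space (Ω, 𝓕, P) contains a determining subsequence, i.e. a subsequence (X_{n_k}) such that for every measurable A ⊂ Ω with P(A) > 0 there exists a distribution function F_A with lim_{k→∞} P(X_{n_k} < t | A) = F_A(t) for all continuity points t of F_A. -/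
open MeasureTheory Filter Finset
open scoped Topology BoundedContinuousFunction ENNReal

/-!
View the indicators of the events `X n < q`, `q` rational, as a bounded family in `L²(P)`. A
diagonal argument makes all inner products of members of this family converge along a common
subsequence, hence also those with elements of its closed span; elements orthogonal to the span
contribute nothing, so the indicators converge weakly in `L²(P)`. Testing against `1_A` gives
convergence of `P(X n < q | A)` for every `A` at once. Helly's selection argument turns convergence
at rational `q` into convergence at the continuity points of a monotone function, and tightness,
which conditioning on `A` preserves, makes this function a distribution function.
-/

theorem exists_subseq_forall_tendsto {ι : Type*} [Countable ι] {X : ι → Type*}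
    [∀ i, PseudoMetricSpace (X i)] [∀ i, ProperSpace (X i)] {u : ∀ i, ℕ → X i}
    (hu : ∀ i, Bornology.IsBounded (Set.range (u i))) :
    ∃ φ : ℕ → ℕ, StrictMono φ ∧ ∀ i, ∃ a, Tendsto (fun n => u i (φ n)) atTop (𝓝 a) := by
  obtain ⟨a, -, φ, hφ, hlim⟩ :=
    (isCompact_univ_pi fun i => (hu i).isCompact_closure).tendsto_subseq (x := fun n i => u i n)
      fun n i _ => subset_closure (Set.mem_range_self n)
  exact ⟨φ, hφ, fun i => ⟨a i, tendsto_pi_nhds.1 hlim i⟩⟩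

section WeakConvergence

variable {ι 𝕜 E F : Type*} {l : Filter ι}

theorem isClosed_setOfPred_cauchy_map_of_equicontinuous {X α : Type*} [TopologicalSpace X]
    [UniformSpace α] {T : ι → X → α} (hT : Equicontinuous T) :
    IsClosed {x | Cauchy (map (T · x) l)} := by
  refine isClosed_of_closure_subset fun x hx => ?_
  obtain ⟨y, hy⟩ := closure_nonempty_iff.1 ⟨x, hx⟩
  have : l.NeBot := (cauchy_map_iff.1 hy).1
  refine cauchy_map_iff.2 ⟨this, fun V hV => ?_⟩
  obtain ⟨W, hW, hWsymm, hWV⟩ := comp_comp_symm_mem_uniformity_sets hV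
  obtain ⟨z, hz, hzcauchy⟩ := mem_closure_iff_nhds.1 hx _ (hT x W hW)
  rw [Filter.mem_map]
  filter_upwards [(cauchy_map_iff.1 hzcauchy).2.eventually_mem hW] with p hp
  exact hWV ⟨T p.2 z, ⟨T p.1 z, hz p.1, hp⟩, hWsymm.symm _ _ (hz p.2)⟩

theorem exists_tendsto_of_mem_closure_span [NeBot l] [Semiring 𝕜] [AddCommMonoid E] [Module 𝕜 E]
    [TopologicalSpace E] [AddCommMonoid F] [Module 𝕜 F] [UniformSpace F] [CompleteSpace F]
    [ContinuousAdd F] [ContinuousConstSMul 𝕜 F] {T : ι → E →ₗ[𝕜] F}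
    (hT : Equicontinuous fun i => ⇑(T i)) {s : Set E}
    (hs : ∀ x ∈ s, ∃ y, Tendsto (T · x) l (𝓝 y)) {x : E}
    (hx : x ∈ closure (Submodule.span 𝕜 s : Set E)) : ∃ y, Tendsto (T · x) l (𝓝 y) := by
  have hspan : ∀ z ∈ Submodule.span 𝕜 s, ∃ y, Tendsto (T · z) l (𝓝 y) := by
    intro z hz
    induction hz using Submodule.span_induction with
    | mem z hz => exact hs z hz
    | zero => exact ⟨0, by simpa only [map_zero] using tendsto_const_nhds⟩
    | add a b _ _ ha hb =>
      obtain ⟨ya, hya⟩ := ha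
      obtain ⟨yb, hyb⟩ := hb
      exact ⟨ya + yb, by simpa only [map_add] using hya.add hyb⟩
    | smul c a _ ha =>
      obtain ⟨y, hy⟩ := ha
      exact ⟨c • y, by simpa only [map_smul] using hy.const_smul c⟩
  simp only [← cauchy_map_iff_exists_tendsto] at hspan ⊢
  exact closure_minimal hspan (isClosed_setOfPred_cauchy_map_of_equicontinuous hT) hx

variable [RCLike 𝕜] [NormedAddCommGroup E] [InnerProductSpace 𝕜 E] [CompleteSpace E]

open scoped InnerProductSpace

theorem exists_tendsto_inner_of_forall_mem [NeBot l] {f : ι → E} {C : ℝ} (hf : ∀ i, ‖f i‖ ≤ C)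
    {s : Set E} (hfs : ∀ i, f i ∈ s) (hs : ∀ x ∈ s, ∃ c, Tendsto (fun i => ⟪f i, x⟫_𝕜) l (𝓝 c))
    (x : E) : ∃ c, Tendsto (fun i => ⟪f i, x⟫_𝕜) l (𝓝 c) := by
  have hequi : Equicontinuous fun i => ⇑(innerSL 𝕜 (f i) : E →ₗ[𝕜] 𝕜) :=
    (LipschitzWith.uniformEquicontinuous _ C.toNNReal fun i =>
      ContinuousLinearMap.lipschitzWith_of_opNorm_le (by
        rw [innerSL_apply_norm]
        exact (hf i).trans (Real.le_coe_toNNReal C))).equicontinuous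
  let K := (Submodule.span 𝕜 s).topologicalClosure
  have : CompleteSpace K := (Submodule.isClosed_topologicalClosure _).completeSpace_coe
  obtain ⟨y, hy, z, hz, rfl⟩ := K.exists_add_mem_mem_orthogonal x
  have horth : ∀ i, ⟪f i, z⟫_𝕜 = 0 := fun i =>
    hz _ (Submodule.le_topologicalClosure _ (Submodule.subset_span (hfs i)))
  simp only [inner_add_right, horth, add_zero]
  exact exists_tendsto_of_mem_closure_span hequi hs hy

theorem exists_subseq_forall_tendsto_inner [Countable ι] {f : ι → ℕ → E}
    (hf : ∀ i, ∃ C, ∀ n, ‖f i n‖ ≤ C) :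
    ∃ φ : ℕ → ℕ, StrictMono φ ∧
      ∀ i, ∃ y, ∀ x, Tendsto (fun n => ⟪f i (φ n), x⟫_𝕜) atTop (𝓝 ⟪y, x⟫_𝕜) := by
  choose C hC using hf
  have hbdd : ∀ p : ι × ι × ℕ,
      Bornology.IsBounded (Set.range fun n => ⟪f p.1 n, f p.2.1 p.2.2⟫_𝕜) := by
    rintro ⟨i, j, m⟩
    refine isBounded_iff_forall_norm_le.2 ⟨C i * ‖f j m‖, Set.forall_mem_range.2 fun n => ?_⟩
    exact (norm_inner_le_norm _ _).trans (by gcongr; exact hC i n)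
  obtain ⟨φ, hφ, hlim⟩ := exists_subseq_forall_tendsto hbdd
  refine ⟨φ, hφ, fun i => ?_⟩
  have hconv : ∀ x, ∃ c, Tendsto (fun n => ⟪f i (φ n), x⟫_𝕜) atTop (𝓝 c) :=
    exists_tendsto_inner_of_forall_mem (fun n => hC i (φ n))
      (s := Set.range fun p : ι × ℕ => f p.1 p.2) (fun n => ⟨(i, φ n), rfl⟩)
      (Set.forall_mem_range.2 fun p => hlim (i, p))
  choose L hL using hconv
  let Φ : StrongDual 𝕜 E :=
    continuousLinearMapOfTendsto (fun n => innerSL 𝕜 (f i (φ n))) (tendsto_pi_nhds.2 hL)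
  refine ⟨(InnerProductSpace.toDual 𝕜 E).symm Φ, fun x => ?_⟩
  rw [InnerProductSpace.toDual_symm_apply]
  exact hL x

end WeakConvergence

theorem exists_subseq_forall_tendsto_measureReal_inter {Ω ι : Type*} [MeasurableSpace Ω]
    (μ : Measure Ω) [IsFiniteMeasure μ] [Countable ι] {s : ι → ℕ → Set Ω}
    (hs : ∀ i n, MeasurableSet (s i n)) :
    ∃ φ : ℕ → ℕ, StrictMono φ ∧ ∀ A, MeasurableSet A →
      ∀ i, ∃ a, Tendsto (fun n => μ.real (A ∩ s i (φ n))) atTop (𝓝 a) := by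
  let f : ι → ℕ → Lp ℝ 2 μ := fun i n => indicatorConstLp 2 (hs i n) (measure_ne_top μ _) 1
  have hf : ∀ i, ∃ C, ∀ n, ‖f i n‖ ≤ C := fun i =>
    ⟨‖(1 : ℝ)‖ * μ.real Set.univ ^ (1 / ENNReal.toReal 2), fun n =>
      norm_indicatorConstLp_le.trans (by gcongr; exacts [measure_ne_top μ _, Set.subset_univ _])⟩
  obtain ⟨φ, hφ, hlim⟩ := exists_subseq_forall_tendsto_inner (𝕜 := ℝ) hf
  refine ⟨φ, hφ, fun A hA i => ?_⟩
  obtain ⟨g, hg⟩ := hlim i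
  refine ⟨_, (hg (indicatorConstLp 2 hA (measure_ne_top μ A) 1)).congr fun n => ?_⟩
  rw [L2.real_inner_indicatorConstLp_one_indicatorConstLp_one, Set.inter_comm]

section Helly

variable {ι α β : Type*} {l : Filter ι}
  [LinearOrder α] [TopologicalSpace α] [OrderTopology α] [DenselyOrdered α]
  [NoMinOrder α] [NoMaxOrder α] {D : Set α}

theorem tendsto_of_continuousAt_of_dense [LinearOrder β] [TopologicalSpace β] [OrderTopology β]
    {u : ι → α → β} (hu : ∀ i, Monotone (u i)) (hD : Dense D) {F : α → β}
    (hF : ∀ d ∈ D, Tendsto (u · d) l (𝓝 (F d))) {t : α} (ht : ContinuousAt F t) :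
    Tendsto (u · t) l (𝓝 (F t)) := by
  refine tendsto_order.2 ⟨fun a ha => ?_, fun a ha => ?_⟩
  · obtain ⟨c, hct, hc⟩ := exists_Ioc_subset_of_mem_nhds (ht.eventually_const_lt ha) (exists_lt t)
    obtain ⟨d, hdD, hcd, hdt⟩ := hD.exists_between hct
    filter_upwards [(hF d hdD).eventually_const_lt (hc ⟨hcd, hdt.le⟩)] with i hi
    exact hi.trans_le (hu i hdt.le)
  · obtain ⟨c, htc, hc⟩ := exists_Ico_subset_of_mem_nhds (ht.eventually_lt_const ha) (exists_gt t)
    obtain ⟨d, hdD, htd, hdc⟩ := hD.exists_between htc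
    filter_upwards [(hF d hdD).eventually_lt_const (hc ⟨htd.le, hdc⟩)] with i hi
    exact (hu i htd.le).trans_lt hi

theorem exists_monotone_forall_tendsto_of_dense [NeBot l] [ConditionallyCompleteLinearOrder β]
    [TopologicalSpace β] [OrderTopology β] {u : ι → α → β} (hu : ∀ i, Monotone (u i))
    (hD : Dense D) (hlim : ∀ d ∈ D, ∃ y, Tendsto (u · d) l (𝓝 y)) :
    ∃ F : α → β, Monotone F ∧ (∀ d ∈ D, Tendsto (u · d) l (𝓝 (F d))) ∧
      ∀ t, ContinuousAt F t → Tendsto (u · t) l (𝓝 (F t)) := by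
  have hle : ∀ t, IsBoundedUnder (· ≤ ·) l (u · t) := fun t => by
    obtain ⟨d, hdD, htd⟩ := hD.exists_gt t
    obtain ⟨y, hy⟩ := hlim d hdD
    exact hy.isBoundedUnder_le.mono_le (.of_forall fun i => hu i htd.le)
  have hge : ∀ t, IsBoundedUnder (· ≥ ·) l (u · t) := fun t => by
    obtain ⟨d, hdD, hdt⟩ := hD.exists_lt t
    obtain ⟨y, hy⟩ := hlim d hdD
    exact hy.isBoundedUnder_ge.mono_ge (.of_forall fun i => hu i hdt.le)
  have hF : ∀ d ∈ D, Tendsto (u · d) l (𝓝 (limsup (u · d) l)) := fun d hd => by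
    obtain ⟨y, hy⟩ := hlim d hd
    rwa [hy.limsup_eq]
  refine ⟨fun t => limsup (u · t) l, fun s t hst => ?_, hF,
    fun t => tendsto_of_continuousAt_of_dense hu hD hF⟩
  exact limsup_le_limsup (.of_forall fun i => hu i hst) (hge s).isCoboundedUnder_le (hle t)

end Helly

theorem exists_isDistFun_forall_tendsto_of_dense {ι : Type*} {l : Filter ι} [NeBot l]
    {u : ι → ℝ → ℝ} (hu : ∀ i, Monotone (u i)) (hu_nonneg : ∀ i t, 0 ≤ u i t)
    (hu_le_one : ∀ i t, u i t ≤ 1) (hbot : ∀ ε > 0, ∃ K, ∀ i, u i K ≤ ε)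
    (htop : ∀ ε > 0, ∃ K, ∀ i, 1 - ε ≤ u i K) {D : Set ℝ} (hD : Dense D)
    (hlim : ∀ d ∈ D, ∃ y, Tendsto (u · d) l (𝓝 y)) :
    ∃ F, IsDistFun F ∧ ∀ t, ContinuousAt F t → Tendsto (u · t) l (𝓝 (F t)) := by
  obtain ⟨F, hF, hFD, hFcont⟩ := exists_monotone_forall_tendsto_of_dense hu hD hlim
  have hF_nonneg : ∀ t, 0 ≤ F t := fun t => by
    obtain ⟨d, hdD, hdt⟩ := hD.exists_lt t
    exact (ge_of_tendsto' (hFD d hdD) fun i => hu_nonneg i d).trans (hF hdt.le)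
  have hF_le_one : ∀ t, F t ≤ 1 := fun t => by
    obtain ⟨d, hdD, htd⟩ := hD.exists_gt t
    exact (hF htd.le).trans (le_of_tendsto' (hFD d hdD) fun i => hu_le_one i d)
  refine ⟨F, ⟨hF, ?_, ?_⟩, hFcont⟩
  · refine tendsto_order.2 ⟨fun a ha => .of_forall fun t => ha.trans_le (hF_nonneg t),
      fun a ha => ?_⟩
    obtain ⟨K, hK⟩ := hbot (a / 2) (half_pos ha)
    obtain ⟨d, hdD, hdK⟩ := hD.exists_lt K
    have hFd : F d ≤ a / 2 := le_of_tendsto' (hFD d hdD) fun i => (hu i hdK.le).trans (hK i)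
    filter_upwards [eventually_le_atBot d] with t ht
    linarith [hF ht]
  · refine tendsto_order.2 ⟨fun a ha => ?_,
      fun a ha => .of_forall fun t => (hF_le_one t).trans_lt ha⟩
    obtain ⟨K, hK⟩ := htop ((1 - a) / 2) (half_pos (sub_pos.2 ha))
    obtain ⟨d, hdD, hKd⟩ := hD.exists_gt K
    have hFd : 1 - (1 - a) / 2 ≤ F d :=
      ge_of_tendsto' (hFD d hdD) fun i => (hK i).trans (hu i hKd.le)
    filter_upwards [eventually_ge_atTop d] with t ht
    linarith [hF ht]

section TightSequences

open scoped ProbabilityTheory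

variable {Ω : Type*} [MeasurableSpace Ω]

theorem exists_isDistFun_forall_tendsto_measureReal_lt {ι : Type*} {l : Filter ι}
    [NeBot l] (μ : Measure Ω) [IsProbabilityMeasure μ] {X : ι → Ω → ℝ}
    (htight : ∀ ε > 0, ∃ K, ∀ i, μ.real {ω | K < |X i ω|} ≤ ε) {D : Set ℝ} (hD : Dense D)
    (hlim : ∀ d ∈ D, ∃ y, Tendsto (fun i => μ.real {ω | X i ω < d}) l (𝓝 y)) :
    ∃ F, IsDistFun F ∧ ∀ t, ContinuousAt F t →
      Tendsto (fun i => μ.real {ω | X i ω < t}) l (𝓝 (F t)) := by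
  refine exists_isDistFun_forall_tendsto_of_dense
    (fun i s t hst => measureReal_mono fun ω (hω : X i ω < s) => hω.trans_le hst)
    (fun _ _ => measureReal_nonneg) (fun _ _ => measureReal_le_one) ?_ ?_ hD hlim
  · intro ε hε
    obtain ⟨K, hK⟩ := htight ε hε
    refine ⟨-K, fun i => (measureReal_mono fun ω (hω : X i ω < -K) => ?_).trans (hK i)⟩
    exact lt_abs.2 (.inr (lt_neg.1 hω))
  · intro ε hε
    obtain ⟨K, hK⟩ := htight ε hε
    refine ⟨K + 1, fun i => ?_⟩
    have hcover : Set.univ ⊆ {ω | X i ω < K + 1} ∪ {ω | K < |X i ω|} := fun ω _ =>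
      (lt_or_ge (X i ω) (K + 1)).imp id fun h => (lt_add_one K).trans_le (h.trans (le_abs_self _))
    have hone : 1 ≤ μ.real {ω | X i ω < K + 1} + μ.real {ω | K < |X i ω|} := by
      simpa only [probReal_univ] using
        (measureReal_mono (μ := μ) hcover).trans (measureReal_union_le _ _)
    linarith [hK i]

theorem measureReal_cond (μ : Measure Ω) {A : Set Ω} (hA : MeasurableSet A) (s : Set Ω) :
    μ[|A].real s = μ.real (A ∩ s) / μ.real A := by
  rw [measureReal_def, ProbabilityTheory.cond_apply hA, ENNReal.toReal_mul, ENNReal.toReal_inv,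
    inv_mul_eq_div, ← measureReal_def, ← measureReal_def]

theorem determining_of_tight_of_dense (P : Measure Ω) [IsFiniteMeasure P] {X : ℕ → Ω → ℝ}
    (htight : ∀ ε > 0, ∃ K, ∀ n, P.real {ω | K < |X n ω|} ≤ ε) {D : Set ℝ} (hD : Dense D)
    (hlim : ∀ A, MeasurableSet A → ∀ d ∈ D,
      ∃ y, Tendsto (fun n => P.real (A ∩ {ω | X n ω < d})) atTop (𝓝 y)) :
    Determining P X := by
  intro A hA hPA
  have hA_pos : 0 < P.real A := ENNReal.toReal_pos hPA (measure_ne_top P A)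
  have : IsProbabilityMeasure P[|A] := ProbabilityTheory.cond_isProbabilityMeasure hPA
  have htight_cond : ∀ ε > 0, ∃ K, ∀ n, P[|A].real {ω | K < |X n ω|} ≤ ε := by
    intro ε hε
    obtain ⟨K, hK⟩ := htight (ε * P.real A) (mul_pos hε hA_pos)
    refine ⟨K, fun n => ?_⟩
    rw [measureReal_cond P hA, div_le_iff₀ hA_pos]
    exact (measureReal_mono Set.inter_subset_right).trans (hK n)
  have hlim_cond : ∀ d ∈ D, ∃ y, Tendsto (fun n => P[|A].real {ω | X n ω < d}) atTop (𝓝 y) := by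
    intro d hd
    obtain ⟨y, hy⟩ := hlim A hA d hd
    simp only [measureReal_cond P hA]
    exact ⟨_, hy.div_const _⟩
  simp only [← measureReal_def, ← measureReal_cond P hA]
  exact exists_isDistFun_forall_tendsto_measureReal_lt P[|A] htight_cond hD hlim_cond

end TightSequences

/-- Every tight sequence of random variables contains a determining subsequence. -/
theorem statement13
    {Ω : Type*} [MeasurableSpace Ω] (P : Measure Ω) [IsProbabilityMeasure P]
    (X : ℕ → Ω → ℝ) (hXmeas : ∀ n, Measurable (X n))
    (htight : ∀ ε > (0 : ℝ), ∃ K > (0 : ℝ), ∀ n, P {ω | K < |X n ω|} ≤ ENNReal.ofReal ε) :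
    ∃ n : ℕ → ℕ, StrictMono n ∧ Determining P (fun k => X (n k)) := by
  obtain ⟨φ, hφ, hlim⟩ := exists_subseq_forall_tendsto_measureReal_inter P
    (s := fun (q : ℚ) n => {ω | X n ω < q}) fun q n => measurableSet_lt (hXmeas n) measurable_const
  refine ⟨φ, hφ, determining_of_tight_of_dense P (fun ε hε => ?_) Rat.denseRange_cast
    fun A hA => Set.forall_mem_range.2 (hlim A hA)⟩
  obtain ⟨K, -, hK⟩ := htight ε hε
  exact ⟨K, fun k => ENNReal.toReal_le_of_le_ofReal hε.le (hK (φ k))⟩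
end

section
/- Let 0 < α < 2 and let F be the distribution function of a symmetric probability distribution on ℝ such that 1 − F(x) = c₁ x^{−α} + β(x) x^{−α} for x > 0, where c₁ > 0 is a constant, β(x) → 0 as x → ∞, and β is non-increasing on [x₀, ∞) for some x₀ > 0. Then there exists a constant c > 0 such that the characteristic function φ of F satisfies φ(t) = 1 − c|t|^α + o(|t|^α) as t → 0; in other words, the distribution belongs to S(α, c). -/
open MeasureTheory Filter Finset
open scoped Topology BoundedContinuousFunction ENNReal

/-! For a nonnegative random variable `X`, writing `1 - cos` as an integral of `sin` gives,
formally, `𝔼[1 - cos (r X)] = ∫₀^∞ sin y · P(X > y / r) dy`, and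
`r^(-α) P(X > y / r) → c y^(-α)` as `r → 0` if `P(X > x) ∼ c x^(-α)`. The integral need not
converge absolutely when `α ≤ 1`, so dominated convergence is applied only up to a multiple `A` of
`2π`, where `1 - cos` vanishes: the cut-off costs at most `2 P(X > A / r)`, which multiplied by
`r^(-α)` tends to `2 c A^(-α)`, and this is small for large `A`. Integrating by parts turns the
limit into the absolutely convergent integral `c α ∫₀^∞ (1 - cos y) y^(-α-1) dy`. For a symmetric
law, `1 - φ(t) = 𝔼[1 - cos (|t| |X|)]`. -/

/-- The constant `κ(α) = α ∫₀^∞ (1 - cos y) y^(-α-1) dy`: if `P(|X| > x) ∼ c x^(-α)` as `x → ∞`,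
then `1 - 𝔼[cos (t X)] ∼ c κ(α) |t|^α` as `t → 0`. -/
noncomputable def stableConst (α : ℝ) : ℝ :=
  α * ∫ y in Set.Ioi (0 : ℝ), (1 - Real.cos y) * y ^ (-α - 1)

theorem tendsto_of_forall_eventually_between {ι κ R : Type*} [TopologicalSpace R] [LinearOrder R]
    [OrderTopology R] {f : Filter ι} {g : Filter κ} [g.NeBot] {J : ι → R} {l u : κ → ι → R}
    {L U : κ → R} {C : R} (hl : ∀ n, ∀ᶠ t in f, l n t ≤ J t) (hu : ∀ n, ∀ᶠ t in f, J t ≤ u n t)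
    (hL : ∀ n, Tendsto (l n) f (𝓝 (L n))) (hU : ∀ n, Tendsto (u n) f (𝓝 (U n)))
    (hLC : Tendsto L g (𝓝 C)) (hUC : Tendsto U g (𝓝 C)) : Tendsto J f (𝓝 C) := by
  refine tendsto_order.2 ⟨fun a ha => ?_, fun b hb => ?_⟩
  · obtain ⟨n, hn⟩ := (hLC.eventually_const_lt ha).exists
    filter_upwards [hl n, (hL n).eventually_const_lt hn] with t hlt hat using hat.trans_le hlt
  · obtain ⟨n, hn⟩ := (hUC.eventually_lt_const hb).exists
    filter_upwards [hu n, (hU n).eventually_lt_const hn] with t hut htb using hut.trans_lt htb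

section PowerSingularity

theorem intervalIntegrable_mul_rpow_of_abs_le_rpow {f : ℝ → ℝ} (hf : Measurable f) {r s A : ℝ}
    (hA : 0 ≤ A) (hrs : -1 < s + r) (hfs : ∀ y, 0 < y → |f y| ≤ y ^ s) :
    IntervalIntegrable (fun y => f y * y ^ r) volume 0 A := by
  refine (intervalIntegral.intervalIntegrable_rpow' hrs).mono_fun (by fun_prop) ?_
  rw [Set.uIoc_of_le hA]
  filter_upwards [ae_restrict_mem measurableSet_Ioc] with y hy
  rw [Real.rpow_add hy.1, norm_mul, norm_mul, Real.norm_of_nonneg (Real.rpow_nonneg hy.1.le s)]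
  exact mul_le_mul_of_nonneg_right (hfs y hy.1) (norm_nonneg _)

theorem abs_sin_le_rpow_one {y : ℝ} (hy : 0 < y) : |Real.sin y| ≤ y ^ (1 : ℝ) := by
  simpa only [Real.rpow_one, abs_of_pos hy] using Real.abs_sin_le_abs (x := y)

theorem abs_one_sub_cos (y : ℝ) : |1 - Real.cos y| = 1 - Real.cos y :=
  abs_of_nonneg (sub_nonneg.2 (Real.cos_le_one y))

theorem abs_one_sub_cos_le_two (y : ℝ) : |1 - Real.cos y| ≤ 2 := by
  rw [abs_one_sub_cos]
  linarith [Real.neg_one_le_cos y]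

theorem abs_one_sub_cos_le_rpow_two (y : ℝ) : |1 - Real.cos y| ≤ y ^ (2 : ℝ) := by
  rw [abs_one_sub_cos, Real.rpow_two]
  linarith [Real.one_sub_sq_div_two_le_cos (x := y), sq_nonneg y]

variable {α : ℝ}

theorem intervalIntegrable_sin_mul_rpow (hα2 : α < 2) {A : ℝ} (hA : 0 ≤ A) :
    IntervalIntegrable (fun y => Real.sin y * y ^ (-α)) volume 0 A :=
  intervalIntegrable_mul_rpow_of_abs_le_rpow Real.measurable_sin hA (by linarith)
    fun _ => abs_sin_le_rpow_one

theorem intervalIntegrable_one_sub_cos_mul_rpow (hα2 : α < 2) {A : ℝ} (hA : 0 ≤ A) :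
    IntervalIntegrable (fun y => (1 - Real.cos y) * y ^ (-α - 1)) volume 0 A :=
  intervalIntegrable_mul_rpow_of_abs_le_rpow (by fun_prop) hA (by linarith)
    fun y _ => abs_one_sub_cos_le_rpow_two y

theorem integrableOn_one_sub_cos_mul_rpow (hα : 0 < α) (hα2 : α < 2) :
    IntegrableOn (fun y => (1 - Real.cos y) * y ^ (-α - 1)) (Set.Ioi 0) := by
  rw [← Set.Ioc_union_Ioi_eq_Ioi zero_le_one]
  refine ((intervalIntegrable_iff_integrableOn_Ioc_of_le zero_le_one).1
    (intervalIntegrable_one_sub_cos_mul_rpow hα2 zero_le_one)).union ?_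
  exact (integrableOn_Ioi_rpow_of_lt (by linarith) one_pos).bdd_mul
    (by fun_prop) (ae_of_all _ abs_one_sub_cos_le_two)

theorem stableConst_pos (hα : 0 < α) (hα2 : α < 2) : 0 < stableConst α := by
  refine mul_pos hα ((setIntegral_pos_iff_support_of_nonneg_ae ?_
    (integrableOn_one_sub_cos_mul_rpow hα hα2)).2 ?_)
  · filter_upwards [ae_restrict_mem measurableSet_Ioi] with y hy
    exact mul_nonneg (sub_nonneg.2 (Real.cos_le_one y)) (Real.rpow_nonneg (le_of_lt hy) _)
  · have hsub : Set.Ioo 0 1 ⊆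
        Function.support (fun y : ℝ => (1 - Real.cos y) * y ^ (-α - 1)) ∩ Set.Ioi 0 := by
      intro y hy
      have hcos : Real.cos y < 1 := by
        simpa using Real.cos_lt_cos_of_nonneg_of_le_pi le_rfl
          (by linarith [hy.2, Real.pi_gt_three]) hy.1
      exact ⟨(mul_pos (sub_pos.2 hcos) (Real.rpow_pos_of_pos hy.1 _)).ne', hy.1⟩
    exact lt_of_lt_of_le (by simp) (measure_mono hsub)

theorem tendsto_one_sub_cos_mul_rpow_nhdsGT_zero (hα2 : α < 2) :
    Tendsto (fun y : ℝ => (1 - Real.cos y) * y ^ (-α)) (𝓝[>] 0) (𝓝 0) := by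
  have hpow : Tendsto (fun y : ℝ => y ^ (2 - α)) (𝓝[>] 0) (𝓝 0) := by
    have := (Real.continuousAt_rpow_const 0 (2 - α) (Or.inr (by linarith))).tendsto
    rw [Real.zero_rpow (by linarith)] at this
    exact this.mono_left nhdsWithin_le_nhds
  refine squeeze_zero_norm' ?_ hpow
  filter_upwards [self_mem_nhdsWithin] with y (hy : 0 < y)
  rw [norm_mul, Real.norm_of_nonneg (Real.rpow_nonneg hy.le _), sub_eq_add_neg 2 α,
    Real.rpow_add hy]
  exact mul_le_mul_of_nonneg_right (abs_one_sub_cos_le_rpow_two y) (Real.rpow_nonneg hy.le _)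

theorem integral_sin_mul_rpow (hα2 : α < 2) {A : ℝ} (hA : 0 < A) :
    ∫ y in 0..A, Real.sin y * y ^ (-α) =
      (1 - Real.cos A) * A ^ (-α) + α * ∫ y in 0..A, (1 - Real.cos y) * y ^ (-α - 1) := by
  have hderiv : ∀ y, 0 < y → HasDerivAt (fun y => (1 - Real.cos y) * y ^ (-α))
      (Real.sin y * y ^ (-α) - α * ((1 - Real.cos y) * y ^ (-α - 1))) y := by
    intro y hy
    exact (((Real.hasDerivAt_cos y).const_sub 1).mul
      (Real.hasDerivAt_rpow_const (p := -α) (Or.inl hy.ne'))).congr_deriv (by ring)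
  have hsin := intervalIntegrable_sin_mul_rpow hα2 hA.le
  have hcos := (intervalIntegrable_one_sub_cos_mul_rpow hα2 hA.le).const_mul α
  have hFTC := intervalIntegral.integral_eq_sub_of_hasDerivAt_of_tendsto hA
    (fun y hy => hderiv y hy.1) (hsin.sub hcos)
    (tendsto_one_sub_cos_mul_rpow_nhdsGT_zero hα2)
    ((hderiv A hA).continuousAt.tendsto.mono_left nhdsWithin_le_nhds)
  rw [intervalIntegral.integral_sub hsin hcos, intervalIntegral.integral_const_mul] at hFTC
  linarith

theorem tendsto_integral_sin_mul_rpow (hα : 0 < α) (hα2 : α < 2) {A : ℕ → ℝ} (hA0 : ∀ n, 0 < A n)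
    (hcos : ∀ n, Real.cos (A n) = 1) (hA : Tendsto A atTop atTop) :
    Tendsto (fun n => ∫ y in 0..A n, Real.sin y * y ^ (-α)) atTop (𝓝 (stableConst α)) := by
  simp only [integral_sin_mul_rpow hα2 (hA0 _), hcos, sub_self, zero_mul, zero_add]
  exact (intervalIntegral_tendsto_integral_Ioi 0
    (integrableOn_one_sub_cos_mul_rpow hα hα2) hA).const_mul α

end PowerSingularity

section RegularlyVaryingTail

variable {α c : ℝ} {T : ℝ → ℝ}

theorem tendsto_rpow_neg_mul_comp_div (hT : Tendsto (fun x => x ^ α * T x) atTop (𝓝 c)) {y : ℝ}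
    (hy : 0 < y) :
    Tendsto (fun r => r ^ (-α) * T (y / r)) (𝓝[>] 0) (𝓝 (c * y ^ (-α))) := by
  have hdiv : Tendsto (fun r : ℝ => y / r) (𝓝[>] 0) atTop := by
    simpa only [div_eq_mul_inv] using tendsto_inv_nhdsGT_zero.const_mul_atTop hy
  refine ((hT.comp hdiv).mul_const (y ^ (-α))).congr' ?_
  filter_upwards [self_mem_nhdsWithin] with r (hr : 0 < r)
  have hyα : y ^ α ≠ 0 := (Real.rpow_pos_of_pos hy α).ne'
  simp only [Function.comp_apply, Real.div_rpow hy.le hr.le, Real.rpow_neg hy.le,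
    Real.rpow_neg hr.le]
  field_simp

theorem exists_forall_le_mul_rpow_neg (hα : 0 ≤ α) (hbdd : BddAbove (Set.range T))
    (hT : Tendsto (fun x => x ^ α * T x) atTop (𝓝 c)) :
    ∃ K, ∀ x, 0 < x → T x ≤ K * x ^ (-α) := by
  obtain ⟨M, hM⟩ := hbdd
  obtain ⟨x₁, hx₁⟩ := eventually_atTop.1 (hT.eventually_le_const (lt_add_one c))
  refine ⟨max (c + 1) (x₁ ^ α * |M|), fun x hx => ?_⟩
  rw [Real.rpow_neg hx.le, ← div_eq_mul_inv, le_div_iff₀' (Real.rpow_pos_of_pos hx α)]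
  rcases le_total x₁ x with hle | hle
  · exact (hx₁ x hle).trans (le_max_left _ _)
  · calc x ^ α * T x ≤ x ^ α * |M| := by
          gcongr
          exact (hM ⟨x, rfl⟩).trans (le_abs_self M)
      _ ≤ x₁ ^ α * |M| := by gcongr
      _ ≤ max (c + 1) (x₁ ^ α * |M|) := le_max_right _ _

theorem rpow_neg_mul_comp_div_le {K : ℝ} (hK : ∀ x, 0 < x → T x ≤ K * x ^ (-α)) {r y : ℝ}
    (hr : 0 < r) (hy : 0 < y) : r ^ (-α) * T (y / r) ≤ K * y ^ (-α) := by
  calc r ^ (-α) * T (y / r) ≤ r ^ (-α) * (K * (y / r) ^ (-α)) := by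
        gcongr
        exact hK _ (div_pos hy hr)
    _ = K * y ^ (-α) := by
        rw [Real.div_rpow hy.le hr.le]
        field_simp

theorem tendsto_rpow_neg_mul_integral_sin_mul_comp_div (hα : 0 ≤ α) (hα2 : α < 2)
    (hmeas : Measurable T) (hnonneg : ∀ x, 0 ≤ T x) (hbdd : BddAbove (Set.range T))
    (hT : Tendsto (fun x => x ^ α * T x) atTop (𝓝 c)) {A : ℝ} (hA : 0 ≤ A) :
    Tendsto (fun r => r ^ (-α) * ∫ y in 0..A, Real.sin y * T (y / r)) (𝓝[>] 0)
      (𝓝 (c * ∫ y in 0..A, Real.sin y * y ^ (-α))) := by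
  obtain ⟨K, hK⟩ := exists_forall_le_mul_rpow_neg hα hbdd hT
  simp only [← intervalIntegral.integral_const_mul, mul_left_comm _ (Real.sin _)]
  refine intervalIntegral.tendsto_integral_filter_of_dominated_convergence
    (fun y => |Real.sin y * y ^ (-α)| * K) ?_ ?_
    ((intervalIntegrable_sin_mul_rpow hα2 hA).abs.mul_const K) ?_
  · exact Eventually.of_forall fun r => by fun_prop
  · filter_upwards [self_mem_nhdsWithin] with r (hr : 0 < r)
    filter_upwards with y hy
    rw [Set.uIoc_of_le hA] at hy
    rw [norm_mul, Real.norm_of_nonneg (mul_nonneg (Real.rpow_nonneg hr.le _) (hnonneg _)), abs_mul,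
      abs_of_nonneg (Real.rpow_nonneg hy.1.le _), mul_assoc, mul_comm _ K]
    exact mul_le_mul_of_nonneg_left (rpow_neg_mul_comp_div_le hK hr hy.1) (abs_nonneg _)
  · filter_upwards with y hy
    rw [Set.uIoc_of_le hA] at hy
    exact (tendsto_rpow_neg_mul_comp_div hT hy.1).const_mul _

end RegularlyVaryingTail

section Truncation

theorem integral_setIntegral_Iio_eq_integral_mul_measureReal {Ω 𝓨 : Type*} [MeasurableSpace Ω]
    {μ : Measure Ω} [IsFiniteMeasure μ] [MeasurableSpace 𝓨] [TopologicalSpace 𝓨] [LinearOrder 𝓨]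
    [OrderClosedTopology 𝓨] [SecondCountableTopology 𝓨] [OpensMeasurableSpace 𝓨] {ν : Measure 𝓨}
    [SFinite ν] {X : Ω → 𝓨} (hX : Measurable X) {f : 𝓨 → ℝ} (hf : Integrable f ν) :
    ∫ ω, ∫ y in Set.Iio (X ω), f y ∂ν ∂μ = ∫ y, f y * μ.real {ω | y < X ω} ∂ν := by
  have hlt : MeasurableSet {p : Ω × 𝓨 | p.2 < X p.1} :=
    measurableSet_lt measurable_snd (hX.comp measurable_fst)
  have hint : Integrable (fun p : Ω × 𝓨 => (Set.Iio (X p.1)).indicator f p.2) (μ.prod ν) :=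
    hf.comp_snd μ |>.indicator hlt
  calc ∫ ω, ∫ y in Set.Iio (X ω), f y ∂ν ∂μ
      = ∫ ω, ∫ y, (Set.Iio (X ω)).indicator f y ∂ν ∂μ := by
        simp only [integral_indicator measurableSet_Iio]
    _ = ∫ y, ∫ ω, {ω | y < X ω}.indicator (fun _ => f y) ω ∂μ ∂ν := integral_integral_swap hint
    _ = ∫ y, f y * μ.real {ω | y < X ω} ∂ν := by
        simp only [integral_indicator_const _ (measurableSet_lt measurable_const hX), smul_eq_mul,
          mul_comm]

theorem setIntegral_Iio_sin_restrict_Ioc {x A : ℝ} (hx : 0 ≤ x) (hA : 0 ≤ A) :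
    ∫ y in Set.Iio x, Real.sin y ∂volume.restrict (Set.Ioc 0 A) = 1 - Real.cos (min x A) := by
  rw [setIntegral_congr_set Iio_ae_eq_Iic, Measure.restrict_restrict measurableSet_Iic,
    Set.inter_comm, Set.Ioc_inter_Iic, min_comm,
    ← intervalIntegral.integral_of_le (le_min hx hA), integral_sin, Real.cos_zero]

theorem one_sub_cos_min_le {x A : ℝ} (hA : Real.cos A = 1) :
    1 - Real.cos (min x A) ≤ 1 - Real.cos x := by
  rcases min_choice x A with h | h <;> rw [h]
  linarith [Real.cos_le_one x]

theorem one_sub_cos_le_one_sub_cos_min_add_indicator (x A : ℝ) :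
    1 - Real.cos x ≤ 1 - Real.cos (min x A) + (Set.Ioi A).indicator (fun _ => 2) x := by
  rcases le_or_gt x A with h | h
  · simp [h]
  · rw [min_eq_right h.le, Set.indicator_of_mem (Set.mem_Ioi.2 h)]
    linarith [Real.neg_one_le_cos x, Real.cos_le_one A]

variable {Ω : Type*} [MeasurableSpace Ω] {μ : Measure Ω} {X : Ω → ℝ} {α c : ℝ}

theorem tendsto_rpow_neg_mul_measureReal_lt_mul
    (htail : Tendsto (fun x => x ^ α * μ.real {ω | x < X ω}) atTop (𝓝 c)) {A : ℝ} (hA : 0 < A) :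
    Tendsto (fun r => r ^ (-α) * μ.real {ω | A < r * X ω}) (𝓝[>] 0) (𝓝 (c * A ^ (-α))) := by
  refine (tendsto_rpow_neg_mul_comp_div htail hA).congr' ?_
  filter_upwards [self_mem_nhdsWithin] with r (hr : 0 < r)
  simp only [div_lt_iff₀' hr]

variable [IsFiniteMeasure μ]

theorem integrable_one_sub_cos (hX : Measurable X) :
    Integrable (fun ω => 1 - Real.cos (X ω)) μ :=
  Integrable.of_bound (by fun_prop) 2 (ae_of_all _ fun ω => abs_one_sub_cos_le_two (X ω))

theorem integral_one_sub_cos_min (hX : Measurable X) (hX0 : ∀ ω, 0 ≤ X ω) {A : ℝ} (hA : 0 ≤ A) :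
    ∫ ω, (1 - Real.cos (min (X ω) A)) ∂μ = ∫ y in 0..A, Real.sin y * μ.real {ω | y < X ω} := by
  simp only [← setIntegral_Iio_sin_restrict_Ioc (hX0 _) hA]
  rw [intervalIntegral.integral_of_le hA]
  exact integral_setIntegral_Iio_eq_integral_mul_measureReal hX
    Real.continuous_sin.integrableOn_Ioc

theorem integral_sin_mul_measureReal_le (hX : Measurable X) (hX0 : ∀ ω, 0 ≤ X ω) {A : ℝ}
    (hA : 0 ≤ A) (hcos : Real.cos A = 1) :
    ∫ y in 0..A, Real.sin y * μ.real {ω | y < X ω} ≤ ∫ ω, (1 - Real.cos (X ω)) ∂μ := by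
  rw [← integral_one_sub_cos_min hX hX0 hA]
  exact integral_mono (integrable_one_sub_cos (hX.min measurable_const))
    (integrable_one_sub_cos hX) fun ω => one_sub_cos_min_le hcos

theorem integral_one_sub_cos_le (hX : Measurable X) (hX0 : ∀ ω, 0 ≤ X ω) {A : ℝ} (hA : 0 ≤ A) :
    ∫ ω, (1 - Real.cos (X ω)) ∂μ ≤
      (∫ y in 0..A, Real.sin y * μ.real {ω | y < X ω}) + 2 * μ.real {ω | A < X ω} := by
  have hmin := integrable_one_sub_cos (μ := μ) (hX.min (measurable_const (a := A)))
  have hset : MeasurableSet {ω | A < X ω} := measurableSet_lt measurable_const hX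
  have htail : Integrable ({ω | A < X ω}.indicator fun _ => (2 : ℝ)) μ :=
    (integrable_const 2).indicator hset
  calc ∫ ω, (1 - Real.cos (X ω)) ∂μ
      ≤ ∫ ω, (1 - Real.cos (min (X ω) A) + {ω | A < X ω}.indicator (fun _ => 2) ω) ∂μ :=
        integral_mono (integrable_one_sub_cos hX) (hmin.add htail)
          fun ω => one_sub_cos_le_one_sub_cos_min_add_indicator (X ω) A
    _ = _ := by
        rw [integral_add hmin htail, integral_one_sub_cos_min hX hX0 hA,
          integral_indicator_const _ hset, smul_eq_mul, mul_comm 2]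

theorem tendsto_rpow_neg_mul_integral_sin_mul_measureReal_lt_mul (hα : 0 ≤ α) (hα2 : α < 2)
    (htail : Tendsto (fun x => x ^ α * μ.real {ω | x < X ω}) atTop (𝓝 c)) {A : ℝ} (hA : 0 ≤ A) :
    Tendsto (fun r => r ^ (-α) * ∫ y in 0..A, Real.sin y * μ.real {ω | y < r * X ω}) (𝓝[>] 0)
      (𝓝 (c * ∫ y in 0..A, Real.sin y * y ^ (-α))) := by
  have hanti : Antitone fun x => μ.real {ω | x < X ω} := fun x y hxy =>
    measureReal_mono fun ω hω => hxy.trans_lt hω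
  have hbdd : BddAbove (Set.range fun x => μ.real {ω | x < X ω}) :=
    ⟨μ.real Set.univ, Set.forall_mem_range.2 fun x => measureReal_mono (Set.subset_univ _)⟩
  refine (tendsto_rpow_neg_mul_integral_sin_mul_comp_div hα hα2 hanti.measurable
    (fun _ => measureReal_nonneg) hbdd htail hA).congr' ?_
  filter_upwards [self_mem_nhdsWithin] with r (hr : 0 < r)
  simp only [div_lt_iff₀' hr]

theorem tendsto_rpow_neg_mul_integral_one_sub_cos (hα : 0 < α) (hα2 : α < 2)
    (hX : Measurable X) (hX0 : ∀ ω, 0 ≤ X ω)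
    (htail : Tendsto (fun x => x ^ α * μ.real {ω | x < X ω}) atTop (𝓝 c)) :
    Tendsto (fun r => r ^ (-α) * ∫ ω, (1 - Real.cos (r * X ω)) ∂μ) (𝓝[>] 0)
      (𝓝 (c * stableConst α)) := by
  let A : ℕ → ℝ := fun n => (n + 1 : ℕ) * (2 * Real.pi)
  have hA0 : ∀ n, 0 < A n := fun n => by positivity
  have hcos : ∀ n, Real.cos (A n) = 1 := fun n => Real.cos_nat_mul_two_pi _
  have hA : Tendsto A atTop atTop :=
    (tendsto_natCast_atTop_atTop.comp (tendsto_add_atTop_nat 1)).atTop_mul_const Real.two_pi_pos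
  have hrX0 : ∀ r, 0 < r → ∀ ω, 0 ≤ r * X ω := fun r hr ω => mul_nonneg hr.le (hX0 ω)
  have hmain := fun n =>
    tendsto_rpow_neg_mul_integral_sin_mul_measureReal_lt_mul hα.le hα2 htail (hA0 n).le
  have herr := fun n => (tendsto_rpow_neg_mul_measureReal_lt_mul htail (hA0 n)).const_mul 2
  have hmainlim := (tendsto_integral_sin_mul_rpow hα hα2 hA0 hcos hA).const_mul c
  have herrlim : Tendsto (fun n => 2 * (c * A n ^ (-α))) atTop (𝓝 0) := by
    simpa using (((tendsto_rpow_neg_atTop hα).comp hA).const_mul c).const_mul 2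
  refine tendsto_of_forall_eventually_between (fun n => ?_) (fun n => ?_) hmain
    (fun n => (hmain n).add (herr n)) hmainlim (by simpa using hmainlim.add herrlim)
  · filter_upwards [self_mem_nhdsWithin] with r (hr : 0 < r)
    exact mul_le_mul_of_nonneg_left
      (integral_sin_mul_measureReal_le (hX.const_mul r) (hrX0 r hr) (hA0 n).le (hcos n))
      (Real.rpow_nonneg hr.le _)
  · filter_upwards [self_mem_nhdsWithin] with r (hr : 0 < r)
    rw [mul_left_comm 2, ← mul_add]
    exact mul_le_mul_of_nonneg_left
      (integral_one_sub_cos_le (hX.const_mul r) (hrX0 r hr) (hA0 n).le)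
      (Real.rpow_nonneg hr.le _)

end Truncation

section SymmetricMeasure

variable {μ : Measure ℝ}

theorem charFn_eq_one_sub_integral_one_sub_cos [IsProbabilityMeasure μ] [μ.IsNegInvariant] (t : ℝ) :
    charFn μ t = ((1 - ∫ x, (1 - Real.cos (t * x)) ∂μ : ℝ) : ℂ) := by
  have hcos : Integrable (fun x => Real.cos (t * x)) μ :=
    Integrable.of_bound (by fun_prop) 1 (ae_of_all _ fun x => Real.abs_cos_le_one (t * x))
  have hsin : Integrable (fun x => Real.sin (t * x)) μ :=
    Integrable.of_bound (by fun_prop) 1 (ae_of_all _ fun x => Real.abs_sin_le_one (t * x))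
  have hsin0 : ∫ x, Real.sin (t * x) ∂μ = 0 := by
    have hodd := integral_neg_eq_self (fun x => Real.sin (t * x)) μ
    simp only [mul_neg, Real.sin_neg, integral_neg] at hodd
    linarith
  have heuler : ∀ x : ℝ, Complex.exp (Complex.I * (t * x)) =
      (Real.cos (t * x) : ℂ) + (Real.sin (t * x) : ℂ) * Complex.I := fun x => by
    rw [mul_comm, Complex.exp_mul_I]
    push_cast
    rfl
  simp only [charFn, heuler]
  rw [integral_add hcos.ofReal (hsin.ofReal.mul_const _), integral_mul_const,
    integral_complex_ofReal, integral_complex_ofReal, hsin0,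
    integral_sub (integrable_const 1) hcos]
  simp

theorem measureReal_lt_abs_of_isNegInvariant [IsFiniteMeasure μ] [μ.IsNegInvariant] {x : ℝ}
    (hx : 0 ≤ x) : μ.real {y | x < |y|} = 2 * μ.real (Set.Ioi x) := by
  have hunion : {y : ℝ | x < |y|} = Set.Ioi x ∪ -Set.Ioi x := by
    ext y
    simp [lt_abs, lt_neg]
  have hdisj : Disjoint (Set.Ioi x) (-Set.Ioi x) := by
    rw [Set.neg_Ioi, Set.disjoint_left]
    intro y (hxy : x < y) (hyx : y < -x)
    linarith
  rw [hunion, measureReal_union hdisj measurableSet_Ioi.neg, measureReal_def μ (-_),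
    Measure.measure_neg, ← measureReal_def, two_mul]

theorem isLittleO_integral_one_sub_cos_sub [IsFiniteMeasure μ] {α c : ℝ} (hα : 0 < α) (hα2 : α < 2)
    (htail : Tendsto (fun x => x ^ α * μ.real {y | x < |y|}) atTop (𝓝 c)) :
    (fun t => (∫ x, (1 - Real.cos (t * x)) ∂μ) - c * stableConst α * |t| ^ α) =o[𝓝 0]
      fun t => |t| ^ α := by
  have hlim : Tendsto (fun t => |t| ^ (-α) * ∫ x, (1 - Real.cos (t * x)) ∂μ) (𝓝[≠] 0)
      (𝓝 (c * stableConst α)) := by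
    simpa only [Function.comp_def, ← abs_mul, Real.cos_abs] using
      (tendsto_rpow_neg_mul_integral_one_sub_cos hα hα2 continuous_abs.measurable abs_nonneg
        htail).comp tendsto_abs_nhdsNE_zero
  rw [← nhdsWithin_univ, ← Set.union_compl_self {0}, ← Set.insert_eq,
    Asymptotics.isLittleO_insert (by simp [hα.ne'])]
  have hpos : ∀ᶠ t in 𝓝[≠] (0 : ℝ), 0 < |t| ^ α := by
    filter_upwards [self_mem_nhdsWithin] with t ht using Real.rpow_pos_of_pos (abs_pos.2 ht) α
  refine Asymptotics.isLittleO_of_tendsto' (hpos.mono fun t ht h0 => absurd h0 ht.ne') ?_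
  refine (tendsto_sub_nhds_zero_iff.2 hlim).congr' (hpos.mono fun t ht => ?_)
  rw [Real.rpow_neg (abs_nonneg t)]
  field_simp

end SymmetricMeasure

theorem tendsto_rpow_mul_measureReal_Ioi_of_one_sub_eq {α : ℝ} {μ : Measure ℝ}
    [IsProbabilityMeasure μ] {F : ℝ → ℝ} (hF : ∀ t : ℝ, F t = (μ (Set.Iic t)).toReal) {c₁ : ℝ}
    {β : ℝ → ℝ} (heq : ∀ x : ℝ, 0 < x → 1 - F x = c₁ * x ^ (-α) + β x * x ^ (-α))
    (hβlim : Tendsto β atTop (𝓝 0)) :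
    Tendsto (fun x => x ^ α * μ.real (Set.Ioi x)) atTop (𝓝 c₁) := by
  have hlim : Tendsto (fun x => c₁ + β x) atTop (𝓝 c₁) := by simpa using hβlim.const_add c₁
  refine hlim.congr' ?_
  filter_upwards [eventually_gt_atTop 0] with x hx
  have hxα : x ^ α ≠ 0 := (Real.rpow_pos_of_pos hx α).ne'
  rw [← Set.compl_Iic, probReal_compl_eq_one_sub measurableSet_Iic, measureReal_def, ← hF x,
    heq x hx, Real.rpow_neg hx.le]
  field_simp

theorem statement14_general {α : ℝ} (hα : 0 < α) (hα2 : α < 2) {μ : Measure ℝ}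
    [IsProbabilityMeasure μ] (hsymm : μ.map (fun x => -x) = μ) {c₁ : ℝ}
    (htail : Tendsto (fun x => x ^ α * μ.real (Set.Ioi x)) atTop (𝓝 c₁)) :
    MemS α (2 * c₁ * stableConst α) μ := by
  have : μ.IsNegInvariant := ⟨hsymm⟩
  have habs : Tendsto (fun x => x ^ α * μ.real {y | x < |y|}) atTop (𝓝 (2 * c₁)) := by
    refine (htail.const_mul 2).congr' ?_
    filter_upwards [eventually_ge_atTop 0] with x hx
    rw [measureReal_lt_abs_of_isNegInvariant hx, mul_left_comm]
  refine ⟨inferInstance, hsymm, ?_⟩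
  have hre := (isLittleO_integral_one_sub_cos_sub hα hα2 habs).neg_left
  refine (Complex.isLittleO_ofReal_left.2 hre).congr_left fun t => ?_
  rw [charFn_eq_one_sub_integral_one_sub_cos, ← Complex.ofReal_sub, sub_sub_sub_cancel_left,
    neg_sub]

/-- Let `F` be the distribution function of a symmetric probability distribution `μ` on `ℝ`
with `1 - F(x) = c₁ x^{-α} + β(x) x^{-α}` for `x > 0`, where `c₁ > 0`, `β(x) → 0` as
`x → ∞` and `β` is non-increasing on `[x₀, ∞)`. Then there is `c > 0` with
`μ ∈ S(α, c)`, i.e. the characteristic function satisfies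
`φ(t) = 1 - c|t|^α + o(|t|^α)` as `t → 0`. -/
theorem statement14
    (α : ℝ) (hα : 0 < α) (hα2 : α < 2)
    (μ : Measure ℝ) [IsProbabilityMeasure μ] (hsymm : μ.map (fun x => -x) = μ)
    (F : ℝ → ℝ) (hF : ∀ t : ℝ, F t = (μ (Set.Iic t)).toReal)
    (c₁ : ℝ) (hc₁ : 0 < c₁) (β : ℝ → ℝ)
    (heq : ∀ x : ℝ, 0 < x → 1 - F x = c₁ * x ^ (-α) + β x * x ^ (-α))
    (hβlim : Tendsto β atTop (𝓝 0))
    (x₀ : ℝ) (hx₀ : 0 < x₀) (hβmono : AntitoneOn β (Set.Ici x₀)) :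
    ∃ c : ℝ, 0 < c ∧ MemS α c μ := by
  exact ⟨2 * c₁ * stableConst α, mul_pos (by positivity) (stableConst_pos hα hα2),
    statement14_general hα hα2 hsymm (tendsto_rpow_mul_measureReal_Ioi_of_one_sub_eq hF heq hβlim)⟩
end
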